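/- arXiv:1605.08683 — 11 statements merged into one kernel-verified Lean document; each statement's English description precedes it below -/
import Mathlib

section
/- Let α ∈ ℝ with sin α ≠ 0 and let f : ℂ → ℂ be a polynomial function. Then for every z ∈ ℂ, B(F_α(B⁻¹f))(z) = f(e^{-iα} z). In other words, under the Bargmann transform the α-angle fractional Fourier transform corresponds to the composition operator f(z) ↦ f(e^{-iα}z) on entire functions. -/
open MeasureTheory Complex

/-- Integration against the Gaussian measure dλ(z) = π⁻¹ e^{-|z|²} dA(z) on ℂ. -/
noncomputable def gaussInt (F : ℂ → ℂ) : ℂ :=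
  (Real.pi : ℂ)⁻¹ * ∫ w : ℂ, F w * Complex.exp (-(‖w‖ : ℂ)^2)

/-- The Bargmann transform Bf(z) = (2/π)^{1/4} ∫ f(x) e^{2xz - x² - z²/2} dx. -/
noncomputable def Bargmann (f : ℝ → ℂ) (z : ℂ) : ℂ :=
  (((2 / Real.pi) ^ ((1:ℝ)/4) : ℝ) : ℂ) *
    ∫ x : ℝ, f x * Complex.exp (2*x*z - (x:ℂ)^2 - z^2/2)

/-- The inverse Bargmann transform B⁻¹F(x) = (2/π)^{1/4} ∫_ℂ F(z) e^{2xz̄ - x² - z̄²/2} dλ(z). -/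
noncomputable def BargmannInv (F : ℂ → ℂ) (x : ℝ) : ℂ :=
  (((2 / Real.pi) ^ ((1:ℝ)/4) : ℝ) : ℂ) *
    gaussInt (fun z => F z * Complex.exp (2*x*(starRingEnd ℂ z) - (x:ℂ)^2 - (starRingEnd ℂ z)^2/2))

/-- The α-angle fractional Fourier transform (for sin α ≠ 0). The square root
`(1 - i cot α) ^ (1/2)` is the principal one, whose argument lies in (-π/2, π/2]. -/
noncomputable def FrFT (α : ℝ) (f : ℝ → ℂ) (x : ℝ) : ℂ :=
  ((1 - Complex.I * Real.cot α) ^ ((1:ℂ)/2) / (Real.sqrt Real.pi : ℂ)) *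
    Complex.exp (Complex.I * (x:ℂ)^2 * Real.cot α) *
    ∫ t : ℝ, Complex.exp (-2 * Complex.I * ((x:ℂ) * t * (((Real.sin α)⁻¹ : ℝ) : ℂ)
      - ((Real.cot α : ℂ) / 2) * (t:ℂ)^2)) * f t

lemma swap_aux {X : Type*} [MeasurableSpace X] [TopologicalSpace X] [BorelSpace X]
    [SecondCountableTopology X] (μ : Measure X) [SFinite μ] (S : Set ℝ) (hS : MeasurableSet S)
    (hSf : volume S ≠ ⊤)
    (Φ : X → ℝ → ℂ) (hΦ : Continuous (Function.uncurry Φ)) (ψ : X → ℝ) (hψ : Integrable ψ μ)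
    (hb : ∀ x, ∀ θ ∈ S, ‖Φ x θ‖ ≤ ψ x) :
    ∫ x, (∫ θ in S, Φ x θ) ∂μ = ∫ θ in S, (∫ x, Φ x θ ∂μ) := by
  apply integral_integral_swap
  have : IsFiniteMeasure (volume.restrict S) := ⟨by simpa using hSf.lt_top⟩
  have h1 : Integrable (fun p : X × ℝ => ψ p.1 * 1) (μ.prod (volume.restrict S)) :=
    hψ.mul_prod (integrable_const (1:ℝ))
  refine h1.mono' hΦ.aestronglyMeasurable ?_
  have h2 : μ.prod (volume.restrict S) = (μ.prod volume).restrict (Set.univ ×ˢ S) := by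
    rw [← Measure.prod_restrict, Measure.restrict_univ]
  rw [h2, ae_restrict_iff' (MeasurableSet.univ.prod hS)]
  refine Filter.Eventually.of_forall fun p hp => ?_
  simpa [Function.uncurry_def] using hb p.1 p.2 hp.2

lemma integrable_gauss_abs (β K : ℝ) (hβ : 0 < β) :
    Integrable (fun u : ℝ => Real.exp (-β * u ^ 2 + K * |u|)) := by
  have h : ∀ k : ℝ, Integrable (fun u : ℝ => Real.exp (-β * u ^ 2 + k * u)) := by
    intro k
    have := (integrable_cexp_quadratic (b := (β:ℂ)) (by simpa using hβ) (k:ℂ) 0).norm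
    refine this.congr (Filter.Eventually.of_forall fun u => ?_)
    simp only [Complex.norm_exp]
    congr 1
    rw [show (-(β:ℂ) * (u:ℂ)^2 + k * u + 0) = ((-β * u^2 + k * u : ℝ) : ℂ) by push_cast; ring,
      Complex.ofReal_re]
  refine ((h K).add (h (-K))).mono' (by fun_prop) (Filter.Eventually.of_forall fun u => ?_)
  rw [Real.norm_of_nonneg (Real.exp_pos _).le]
  simp only [Pi.add_apply]
  rcases abs_cases u with ⟨h, -⟩ | ⟨h, -⟩ <;> rw [h]
  · linarith [Real.exp_pos (-β * u ^ 2 + -K * u)]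
  · rw [show -β * u ^ 2 + K * -u = -β * u ^ 2 + -K * u by ring]
    linarith [Real.exp_pos (-β * u ^ 2 + K * u)]

noncomputable def cS : Set ℝ := Set.Ioc 0 (2 * Real.pi)

lemma cS_bound (g : ℝ → ℂ) (hg : Continuous g) : ∃ G, 0 ≤ G ∧ ∀ θ ∈ cS, ‖g θ‖ ≤ G := by
  obtain ⟨G, hG⟩ := (isCompact_Icc (a := 0) (b := 2 * Real.pi)).exists_bound_of_continuousOn
    hg.continuousOn
  exact ⟨|G|, abs_nonneg _, fun θ hθ =>
    (hG θ (Set.Ioc_subset_Icc_self hθ)).trans (le_abs_self _)⟩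

lemma cS_meas : MeasurableSet cS := measurableSet_Ioc

lemma cS_fin : volume cS ≠ ⊤ := measure_Ioc_lt_top.ne

lemma re_mul_le (L : ℂ) (K u : ℝ) (h : ‖L‖ ≤ K) : (L * u).re ≤ K * |u| := by
  refine (Complex.re_le_norm _).trans ?_
  rw [norm_mul, Complex.norm_real, Real.norm_eq_abs]
  gcongr

lemma swap1 (b : ℂ) (hb : 0 < b.re) (g L : ℝ → ℂ) (hg : Continuous g) (hL : Continuous L) :
    ∫ x : ℝ, ∫ θ in cS, g θ * Complex.exp (-b * (x:ℂ)^2 + L θ * x) =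
      ∫ θ in cS, g θ * ((Real.pi / b) ^ (1 / 2 : ℂ) * Complex.exp (L θ ^ 2 / (4 * b))) := by
  obtain ⟨G, hG0, hG⟩ := cS_bound g hg
  obtain ⟨K, hK0, hK⟩ := cS_bound L hL
  rw [swap_aux volume cS cS_meas cS_fin _ (by simp only [Function.uncurry_def]; fun_prop)
    (fun x => G * Real.exp (-b.re * x ^ 2 + K * |x|))
    ((integrable_gauss_abs _ _ hb).const_mul G)]
  · congr 1
    ext θ
    rw [integral_const_mul]
    have := integral_cexp_quadratic (b := -b) (by simpa using hb) (L θ) 0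
    simp only [add_zero] at this
    rw [this]
    congr 3
    · simp
    · ring
  · intro x θ hθ
    rw [norm_mul, Complex.norm_exp]
    have h1 := re_mul_le (L θ) K x (hK θ hθ)
    have h2 : (-b * (x:ℂ)^2).re = -b.re * x ^ 2 := by
      rw [← Complex.ofReal_pow, Complex.re_mul_ofReal, Complex.neg_re]
    gcongr
    · exact hG θ hθ
    · rw [Complex.add_re, h2]; linarith

lemma bound2 (L M : ℂ) (K : ℝ) (hL : ‖L‖ ≤ K) (hM : ‖M‖ ≤ K) (p : ℝ × ℝ) :
    ‖Complex.exp (-(3/2) * (p.1:ℂ)^2 - (1/2) * (p.2:ℂ)^2 + Complex.I * p.1 * p.2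
        + L * p.1 + M * p.2)‖ ≤
      Real.exp (-(3/2) * p.1 ^ 2 + K * |p.1|) * Real.exp (-(1/2) * p.2 ^ 2 + K * |p.2|) := by
  rw [Complex.norm_exp, ← Real.exp_add]
  have h1 := re_mul_le L K p.1 hL
  have h2 := re_mul_le M K p.2 hM
  have h3 : (-(3/2) * (p.1:ℂ)^2 - (1/2) * (p.2:ℂ)^2 + Complex.I * p.1 * p.2).re =
      -(3/2) * p.1 ^ 2 - (1/2) * p.2 ^ 2 := by
    rw [show (-(3/2) * (p.1:ℂ)^2 - (1/2) * (p.2:ℂ)^2 + Complex.I * p.1 * p.2) =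
      ((-(3/2) * p.1 ^ 2 - (1/2) * p.2 ^ 2 : ℝ) : ℂ) + ((p.1 * p.2 : ℝ) : ℂ) * Complex.I by
        push_cast; ring]
    simp only [Complex.add_re, Complex.ofReal_re, Complex.re_ofReal_mul, Complex.I_re, mul_zero,
      add_zero]
  gcongr
  rw [Complex.add_re, Complex.add_re, h3]
  linarith

lemma integrable2 (K : ℝ) : Integrable (fun p : ℝ × ℝ =>
      Real.exp (-(3/2) * p.1 ^ 2 + K * |p.1|) * Real.exp (-(1/2) * p.2 ^ 2 + K * |p.2|)) := by
  have := (integrable_gauss_abs (3/2) K (by norm_num)).mul_prod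
    (integrable_gauss_abs (1/2) K (by norm_num))
  exact this

lemma const_aux : ((Real.pi / (1/2 : ℂ)) ^ (1 / 2 : ℂ)) * ((Real.pi / (2 : ℂ)) ^ (1 / 2 : ℂ))
    = Real.pi := by
  have e1 : (Real.pi / (1/2 : ℂ)) = ((2 * Real.pi : ℝ) : ℂ) := by push_cast; ring
  have e2 : (Real.pi / (2 : ℂ)) = ((Real.pi / 2 : ℝ) : ℂ) := by push_cast; ring
  rw [e1, e2, ← Complex.mul_cpow_ofReal_nonneg (by positivity) (by positivity),
    ← Complex.ofReal_mul, show 2 * Real.pi * (Real.pi / 2) = Real.pi ^ 2 by ring,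
    show (1/2 : ℂ) = ((1/2 : ℝ) : ℂ) by push_cast; ring,
    ← Complex.ofReal_cpow (by positivity), ← Real.sqrt_eq_rpow, Real.sqrt_sq Real.pi_pos.le]

lemma gauss2 (L M : ℂ) :
    ∫ p : ℝ × ℝ, Complex.exp (-(3/2) * (p.1:ℂ)^2 - (1/2) * (p.2:ℂ)^2 + Complex.I * p.1 * p.2
        + L * p.1 + M * p.2) =
      Real.pi * Complex.exp ((L + Complex.I * M) ^ 2 / 8 + M ^ 2 / 2) := by
  have hint : Integrable (fun p : ℝ × ℝ => Complex.exp (-(3/2) * (p.1:ℂ)^2 - (1/2) * (p.2:ℂ)^2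
      + Complex.I * p.1 * p.2 + L * p.1 + M * p.2)) (volume.prod volume) := by
    refine (integrable2 (max ‖L‖ ‖M‖)).mono' (Continuous.aestronglyMeasurable (by fun_prop))
      (Filter.Eventually.of_forall fun p => ?_)
    exact bound2 L M _ (le_max_left _ _) (le_max_right _ _) p
  rw [Measure.volume_eq_prod, integral_prod _ hint]
  have h1 : ∀ u : ℝ, ∫ v : ℝ, Complex.exp (-(3/2) * (u:ℂ)^2 - (1/2) * (v:ℂ)^2
      + Complex.I * u * v + L * u + M * v) = (Real.pi / (1/2 : ℂ)) ^ (1 / 2 : ℂ) *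
        Complex.exp (-2 * (u:ℂ)^2 + (L + Complex.I * M) * u + M ^ 2 / 2) := by
    intro u
    have := integral_cexp_quadratic (b := (-(1/2) : ℂ)) (by norm_num) (Complex.I * u + M)
      (-(3/2) * (u:ℂ)^2 + L * u)
    rw [neg_neg] at this
    convert this using 2
    · ext v; congr 1; ring
    · congr 1
      linear_combination -(u:ℂ)^2 / 2 * Complex.I_sq
  simp only [h1]
  rw [integral_const_mul, integral_cexp_quadratic (b := (-2 : ℂ)) (by norm_num), neg_neg,
    ← mul_assoc, const_aux]
  congr 2
  ring

lemma swap2 (g L M : ℝ → ℂ) (hg : Continuous g) (hL : Continuous L) (hM : Continuous M) :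
    ∫ p : ℝ × ℝ, ∫ θ in cS, g θ * Complex.exp (-(3/2) * (p.1:ℂ)^2 - (1/2) * (p.2:ℂ)^2
        + Complex.I * p.1 * p.2 + L θ * p.1 + M θ * p.2) =
      ∫ θ in cS, g θ *
        (Real.pi * Complex.exp ((L θ + Complex.I * M θ) ^ 2 / 8 + M θ ^ 2 / 2)) := by
  obtain ⟨G, hG0, hG⟩ := cS_bound g hg
  obtain ⟨K, hK0, hK⟩ := cS_bound L hL
  obtain ⟨K', hK0', hK'⟩ := cS_bound M hM
  rw [swap_aux volume cS cS_meas cS_fin _ (by simp only [Function.uncurry_def]; fun_prop)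
    _ ((integrable2 (max K K')).const_mul G)]
  · congr 1
    ext θ
    rw [integral_const_mul, gauss2]
  · intro p θ hθ
    rw [norm_mul]
    have := bound2 (L θ) (M θ) (max K K') ((hK θ hθ).trans (le_max_left _ _))
      ((hK' θ hθ).trans (le_max_right _ _)) p
    gcongr
    exact hG θ hθ

/-- Representation of a polynomial as a superposition of exponentials. -/
lemma poly_rep (p : Polynomial ℂ) : ∃ g : ℝ → ℂ, Continuous g ∧ ∀ w : ℂ,
    p.eval w = ∫ θ in cS, g θ * Complex.exp (Complex.exp (θ * Complex.I) * w) := by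
  induction p using Polynomial.induction_on' with
  | add p q hp hq =>
    obtain ⟨g, hg, hp⟩ := hp
    obtain ⟨h, hh, hq⟩ := hq
    refine ⟨g + h, hg.add hh, fun w => ?_⟩
    have key : ∀ g : ℝ → ℂ, Continuous g → Integrable
        (fun θ : ℝ => g θ * Complex.exp (Complex.exp (θ * Complex.I) * w))
          (volume.restrict cS) := by
      intro g hg
      exact Continuous.integrableOn_Ioc (by fun_prop)
    rw [Polynomial.eval_add, hp, hq, ← integral_add (key g hg) (key h hh)]
    simp only [Pi.add_apply, add_mul]
  | monomial n a =>
    refine ⟨fun θ => a * n.factorial / (2 * Real.pi) * Complex.exp (-(n * (θ * Complex.I))),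
      by fun_prop, fun w => ?_⟩
    have hd : DiffContOnCl ℂ (fun s : ℂ => Complex.exp (w * s)) (Metric.ball 0 1) :=
      Differentiable.diffContOnCl (by fun_prop)
    have h := DiffContOnCl.circleIntegral_one_div_sub_center_pow_smul (zero_lt_one) n hd
    rw [iteratedDeriv_cexp_const_mul] at h
    simp only [circleIntegral, deriv_circleMap, circleMap_zero] at h
    rw [intervalIntegral.integral_of_le (by positivity)] at h
    have h3 : ∀ θ : ℝ, (((1:ℝ):ℂ) * Complex.exp (θ * Complex.I) * Complex.I) •
        (1 / (((1:ℝ):ℂ) * Complex.exp (θ * Complex.I) - 0) ^ (n+1)) •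
          Complex.exp (w * (((1:ℝ):ℂ) * Complex.exp (θ * Complex.I))) =
        Complex.I * (Complex.exp (-(n * (θ * Complex.I))) *
          Complex.exp (Complex.exp (θ * Complex.I) * w)) := by
      intro θ
      have hne := Complex.exp_ne_zero (θ * Complex.I)
      rw [Complex.exp_neg, Complex.exp_nat_mul]
      simp only [Complex.ofReal_one, one_mul, sub_zero, smul_eq_mul]
      rw [mul_comm w]
      field_simp
      ring
    simp only [h3] at h
    rw [integral_const_mul] at h
    simp only [mul_assoc]
    simp only [integral_const_mul]
    have hI := Complex.I_ne_zero
    have hpi : (Real.pi : ℂ) ≠ 0 := by exact_mod_cast Real.pi_ne_zero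
    have hf : (n.factorial : ℂ) ≠ 0 := by exact_mod_cast n.factorial_ne_zero
    have h4 : ∫ θ : ℝ in cS, (Complex.exp (-(n * (θ * Complex.I))) *
          Complex.exp (Complex.exp (θ * Complex.I) * w)) = 2 * Real.pi / n.factorial * w ^ n := by
      apply mul_left_cancel₀ hI
      refine h.trans ?_
      simp only [smul_eq_mul, mul_zero, Complex.exp_zero]
      ring
    rw [h4, Polynomial.eval_monomial]
    field_simp

noncomputable def cC : ℂ := (((2 / Real.pi) ^ ((1:ℝ)/4) : ℝ) : ℂ)

lemma cC_aux : cC * cC * (Real.pi / (2 : ℂ)) ^ (1 / 2 : ℂ) = 1 := by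
  have e2 : (Real.pi / (2 : ℂ)) = ((Real.pi / 2 : ℝ) : ℂ) := by push_cast; ring
  have hpi := Real.pi_pos
  rw [cC, e2, show (1/2 : ℂ) = ((1/2 : ℝ) : ℂ) by push_cast; ring,
    ← Complex.ofReal_cpow (by positivity), ← Complex.ofReal_mul, ← Complex.ofReal_mul,
    ← Real.rpow_add (by positivity), show ((1:ℝ)/4 + 1/4) = 1/2 by norm_num,
    ← Real.mul_rpow (by positivity) (by positivity),
    show 2 / Real.pi * (Real.pi / 2) = 1 by field_simp, Real.one_rpow, Complex.ofReal_one]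

lemma step3 (g a : ℝ → ℂ) (hg : Continuous g) (ha : Continuous a) (z : ℂ) :
    Bargmann (fun x => ∫ θ in cS, g θ * (cC * Complex.exp (2 * x * a θ - (x:ℂ)^2 - a θ ^ 2 / 2))) z
      = ∫ θ in cS, g θ * Complex.exp (a θ * z) := by
  have h := swap1 2 (by norm_num)
    (fun θ => g θ * cC * Complex.exp (-(a θ ^ 2 / 2) - z ^ 2 / 2)) (fun θ => 2 * a θ + 2 * z)
    (by fun_prop) (by fun_prop)
  have e : ∀ x : ℝ, (∫ θ in cS, g θ * (cC * Complex.exp (2 * x * a θ - (x:ℂ)^2 - a θ ^ 2 / 2))) *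
      Complex.exp (2*x*z - (x:ℂ)^2 - z^2/2) =
      ∫ θ in cS, g θ * cC * Complex.exp (-(a θ ^ 2 / 2) - z ^ 2 / 2) *
        Complex.exp (-2 * (x:ℂ)^2 + (2 * a θ + 2 * z) * x) := by
    intro x
    rw [← integral_mul_const]
    congr 1
    ext θ
    have : Complex.exp (2 * x * a θ - (x:ℂ)^2 - a θ ^ 2 / 2) *
        Complex.exp (2*x*z - (x:ℂ)^2 - z^2/2) = Complex.exp (-(a θ ^ 2 / 2) - z ^ 2 / 2) *
        Complex.exp (-2 * (x:ℂ)^2 + (2 * a θ + 2 * z) * x) := by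
      rw [← Complex.exp_add, ← Complex.exp_add]; congr 1; ring
    linear_combination g θ * cC * this
  unfold Bargmann
  simp only [e]
  rw [h, ← integral_const_mul]
  congr 1
  ext θ
  have e2 : Complex.exp (-(a θ ^ 2 / 2) - z ^ 2 / 2) *
      Complex.exp ((2 * a θ + 2 * z) ^ 2 / (4 * 2)) = Complex.exp (a θ * z) := by
    rw [← Complex.exp_add]; congr 1; ring
  have hc := cC_aux
  change cC * _ = _
  rw [← e2]
  linear_combination g θ * Complex.exp (-(a θ ^ 2 / 2) - z ^ 2 / 2) *
      Complex.exp ((2 * a θ + 2 * z) ^ 2 / (4 * 2)) * hc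

lemma sqrt_aux (b : ℂ) (hb : 0 < b.re) :
    b ^ ((1:ℂ)/2) / (Real.sqrt Real.pi : ℂ) * (Real.pi / b) ^ (1/2 : ℂ) = 1 := by
  have hb0 : b ≠ 0 := by rintro rfl; simp at hb
  have hpi : (Real.pi : ℂ) ≠ 0 := by exact_mod_cast Real.pi_ne_zero
  have harg : b.arg ≠ Real.pi := by
    intro h
    rw [Complex.arg_eq_pi_iff] at h
    linarith [h.1]
  have h1 : (Real.pi / b : ℂ) ^ (1/2 : ℂ) = (Real.pi : ℂ) ^ (1/2 : ℂ) * (b ^ (1/2 : ℂ))⁻¹ := by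
    rw [← Complex.inv_cpow _ _ harg, div_eq_mul_inv, Complex.cpow_def_of_ne_zero (by simp [hb0]),
      Complex.cpow_def_of_ne_zero hpi, Complex.cpow_def_of_ne_zero (by simp [hb0]),
      Complex.log_ofReal_mul Real.pi_pos (by simp [hb0]), ← Complex.exp_add,
      Complex.ofReal_log Real.pi_pos.le]
    congr 1; ring
  have h2 : (Real.pi : ℂ) ^ (1/2 : ℂ) = (Real.sqrt Real.pi : ℂ) := by
    rw [show (1/2 : ℂ) = ((1/2 : ℝ) : ℂ) by push_cast; ring,
      ← Complex.ofReal_cpow Real.pi_pos.le, ← Real.sqrt_eq_rpow]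
  have h3 : b ^ (1/2 : ℂ) ≠ 0 := by simp [Complex.cpow_eq_zero_iff, hb0]
  have h4 : (Real.sqrt Real.pi : ℂ) ≠ 0 := by
    exact_mod_cast (Real.sqrt_pos.mpr Real.pi_pos).ne'
  rw [h1, h2]
  field_simp

lemma alg_aux (α : ℝ) (hα : Real.sin α ≠ 0) (a x : ℂ) :
    Complex.I * x ^ 2 * Real.cot α + (-(a ^ 2 / 2) +
      (2 * a - 2 * Complex.I * x * (((Real.sin α)⁻¹ : ℝ) : ℂ)) ^ 2 /
        (4 * (1 - Complex.I * Real.cot α))) =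
    2 * x * (Complex.exp (-(Complex.I * α)) * a) - x ^ 2 -
      (Complex.exp (-(Complex.I * α)) * a) ^ 2 / 2 := by
  have hω : Complex.exp (-(Complex.I * α)) = Real.cos α - Complex.I * Real.sin α := by
    rw [show -(Complex.I * (α:ℂ)) = ((-α : ℝ) : ℂ) * Complex.I by push_cast; ring,
      Complex.exp_mul_I, ← Complex.ofReal_cos, ← Complex.ofReal_sin, Real.cos_neg, Real.sin_neg]
    push_cast; ring
  have hSC : (Real.sin α : ℂ) ^ 2 + (Real.cos α : ℂ) ^ 2 - 1 = 0 := by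
    have := Real.sin_sq_add_cos_sq α
    rw [sub_eq_zero]; exact_mod_cast this
  have hS : (Real.sin α : ℂ) ≠ 0 := by exact_mod_cast hα
  rw [hω, Real.cot_eq_cos_div_sin]
  push_cast
  rw [← Complex.ofReal_sin, ← Complex.ofReal_cos]
  generalize (Real.sin α : ℂ) = S at *
  generalize (Real.cos α : ℂ) = C at *
  obtain ⟨u, hu⟩ : ∃ u, u = S⁻¹ := ⟨_, rfl⟩
  have hu1 : S * u - 1 = 0 := by rw [hu, mul_inv_cancel₀ hS, sub_self]
  have hI : Complex.I ^ 2 + 1 = 0 := by simp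
  rw [div_eq_mul_inv C, ← hu]
  have hb : (1 - Complex.I * (C * u)) * (S * Complex.I * (C - Complex.I * S)) = 1 := by
    linear_combination (-Complex.I ^ 2 * C * (C - Complex.I * S)) * hu1 + hSC -
      (C ^ 2 + S ^ 2 - Complex.I * C * S) * hI
  have hb' : (1 - Complex.I * (C * u))⁻¹ = S * Complex.I * (C - Complex.I * S) :=
    inv_eq_of_mul_eq_one_right hb
  rw [div_eq_mul_inv _ (4 * _), mul_inv, hb']
  linear_combination (-2 * Complex.I ^ 2 * (C - Complex.I * S) * x * a +
      Complex.I ^ 3 * x ^ 2 * u * (C - Complex.I * S) - Complex.I ^ 4 * x ^ 2) * hu1 +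
    (Complex.I * x ^ 2 * C * u - x ^ 2 * (Complex.I ^ 2 - 1) - 2 * (C - Complex.I * S) * x * a
      - a ^ 2 * S ^ 2 / 2) * hI + a ^ 2 / 2 * hSC

lemma step2 (α : ℝ) (hα : Real.sin α ≠ 0) (g a : ℝ → ℂ) (hg : Continuous g) (ha : Continuous a)
    (x : ℝ) :
    FrFT α (fun x => ∫ θ in cS, g θ * (cC * Complex.exp (2 * x * a θ - (x:ℂ)^2 - a θ ^ 2 / 2))) x
      = ∫ θ in cS, g θ * (cC * Complex.exp (2 * x * (Complex.exp (-(Complex.I * α)) * a θ) - (x:ℂ)^2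
        - (Complex.exp (-(Complex.I * α)) * a θ) ^ 2 / 2)) := by
  have hb : 0 < (1 - Complex.I * Real.cot α).re := by simp [-Complex.ofReal_cot]
  have h := swap1 (1 - Complex.I * Real.cot α) hb
    (fun θ => g θ * cC * Complex.exp (-(a θ ^ 2 / 2)))
    (fun θ => 2 * a θ - 2 * Complex.I * x * (((Real.sin α)⁻¹ : ℝ) : ℂ))
    (by fun_prop) (by fun_prop)
  have e : ∀ t : ℝ, Complex.exp (-2 * Complex.I * ((x:ℂ) * t * (((Real.sin α)⁻¹ : ℝ) : ℂ)
      - ((Real.cot α : ℂ) / 2) * (t:ℂ)^2)) *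
      (∫ θ in cS, g θ * (cC * Complex.exp (2 * t * a θ - (t:ℂ)^2 - a θ ^ 2 / 2))) =
      ∫ θ in cS, g θ * cC * Complex.exp (-(a θ ^ 2 / 2)) *
        Complex.exp (-(1 - Complex.I * Real.cot α) * (t:ℂ)^2 +
          (2 * a θ - 2 * Complex.I * x * (((Real.sin α)⁻¹ : ℝ) : ℂ)) * t) := by
    intro t
    rw [← integral_const_mul]
    congr 1
    ext θ
    have : Complex.exp (-2 * Complex.I * ((x:ℂ) * t * (((Real.sin α)⁻¹ : ℝ) : ℂ)
      - ((Real.cot α : ℂ) / 2) * (t:ℂ)^2)) *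
        Complex.exp (2 * t * a θ - (t:ℂ)^2 - a θ ^ 2 / 2) = Complex.exp (-(a θ ^ 2 / 2)) *
        Complex.exp (-(1 - Complex.I * Real.cot α) * (t:ℂ)^2 +
          (2 * a θ - 2 * Complex.I * x * (((Real.sin α)⁻¹ : ℝ) : ℂ)) * t) := by
      rw [← Complex.exp_add, ← Complex.exp_add]; congr 1; ring
    linear_combination g θ * cC * this
  unfold FrFT
  simp only [e]
  rw [h, ← integral_const_mul]
  congr 1
  ext θ
  have hc := sqrt_aux _ hb
  rw [← alg_aux α hα (a θ) x, Complex.exp_add, Complex.exp_add]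
  linear_combination g θ * cC * Complex.exp (Complex.I * (x:ℂ)^2 * Real.cot α) *
    Complex.exp (-(a θ ^ 2 / 2)) * Complex.exp ((2 * a θ - 2 * Complex.I * x *
      (((Real.sin α)⁻¹ : ℝ) : ℂ)) ^ 2 / (4 * (1 - Complex.I * Real.cot α))) * hc

lemma step1 (g a : ℝ → ℂ) (hg : Continuous g) (ha : Continuous a) (x : ℝ) :
    BargmannInv (fun w => ∫ θ in cS, g θ * Complex.exp (a θ * w)) x =
      ∫ θ in cS, g θ * (cC * Complex.exp (2 * x * a θ - (x:ℂ)^2 - a θ ^ 2 / 2)) := by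
  have h := swap2 (fun θ => g θ * Complex.exp (-(x:ℂ)^2)) (fun θ => a θ + 2 * x)
    (fun θ => Complex.I * (a θ - 2 * x)) (by fun_prop) (by fun_prop) (by fun_prop)
  have e : ∀ p : ℝ × ℝ, (∫ θ in cS, g θ * Complex.exp (a θ *
        (Complex.measurableEquivRealProd.symm p))) *
      Complex.exp (2*x*(starRingEnd ℂ (Complex.measurableEquivRealProd.symm p)) - (x:ℂ)^2
        - (starRingEnd ℂ (Complex.measurableEquivRealProd.symm p))^2/2) *
      Complex.exp (-(‖Complex.measurableEquivRealProd.symm p‖ : ℂ)^2) =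
      ∫ θ in cS, g θ * Complex.exp (-(x:ℂ)^2) * Complex.exp (-(3/2) * (p.1:ℂ)^2
        - (1/2) * (p.2:ℂ)^2 + Complex.I * p.1 * p.2 + (a θ + 2 * x) * p.1
        + Complex.I * (a θ - 2 * x) * p.2) := by
    rintro ⟨u, v⟩
    have hw : Complex.measurableEquivRealProd.symm (u, v) = (u:ℂ) + v * Complex.I := by
      rw [Complex.measurableEquivRealProd_symm_apply]
      exact Complex.mk_eq_add_mul_I u v
    have hw2 : (starRingEnd ℂ) ((u:ℂ) + v * Complex.I) = (u:ℂ) - v * Complex.I := by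
      simp [sub_eq_add_neg]
    have hn : (‖(u:ℂ) + v * Complex.I‖ : ℂ)^2 = (u:ℂ)^2 + (v:ℂ)^2 := by
      rw [← Complex.mul_conj', hw2]
      linear_combination -(v:ℂ)^2 * Complex.I_sq
    rw [hw, hw2, hn, ← integral_mul_const, ← integral_mul_const]
    congr 1
    ext θ
    have : Complex.exp (a θ * ((u:ℂ) + v * Complex.I)) *
      Complex.exp (2*x*((u:ℂ) - v * Complex.I) - (x:ℂ)^2 - ((u:ℂ) - v * Complex.I)^2/2) *
      Complex.exp (-((u:ℂ)^2 + (v:ℂ)^2)) = Complex.exp (-(x:ℂ)^2) * Complex.exp (-(3/2) * (u:ℂ)^2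
        - (1/2) * (v:ℂ)^2 + Complex.I * u * v + (a θ + 2 * x) * u
        + Complex.I * (a θ - 2 * x) * v) := by
      rw [← Complex.exp_add, ← Complex.exp_add, ← Complex.exp_add]
      congr 1
      linear_combination -(v:ℂ)^2 / 2 * Complex.I_sq
    linear_combination g θ * this
  unfold BargmannInv gaussInt
  rw [← (Complex.volume_preserving_equiv_real_prod.symm).integral_comp
    Complex.measurableEquivRealProd.symm.measurableEmbedding]
  simp only [e]
  rw [h, ← integral_const_mul, ← integral_const_mul]
  congr 1
  ext θ
  have hpi : (Real.pi : ℂ)⁻¹ * Real.pi = 1 :=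
    inv_mul_cancel₀ (by exact_mod_cast Real.pi_ne_zero)
  have e2 : Complex.exp (-(x:ℂ)^2) * Complex.exp ((a θ + 2 * x + Complex.I * (Complex.I *
      (a θ - 2 * x))) ^ 2 / 8 + (Complex.I * (a θ - 2 * x)) ^ 2 / 2) =
      Complex.exp (2 * x * a θ - (x:ℂ)^2 - a θ ^ 2 / 2) := by
    rw [← Complex.exp_add, ← mul_assoc, Complex.I_mul_I, mul_pow, Complex.I_sq]; congr 1; ring
  change cC * _ = _
  rw [← e2]
  linear_combination cC * g θ * (Complex.exp (-(x:ℂ)^2) * Complex.exp ((a θ + 2 * x + Complex.I *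
    (Complex.I * (a θ - 2 * x))) ^ 2 / 8 + (Complex.I * (a θ - 2 * x)) ^ 2 / 2)) * hpi

/-- Under the Bargmann transform, the α-angle fractional Fourier transform corresponds to the
composition operator f(z) ↦ f(e^{-iα}z): for polynomial f, B(F_α(B⁻¹f))(z) = f(e^{-iα}z). -/
theorem bargmann_frft (α : ℝ) (hα : Real.sin α ≠ 0) (p : Polynomial ℂ) (f : ℂ → ℂ)
    (hf : ∀ z, f z = p.eval z) (z : ℂ) :
    Bargmann (FrFT α (BargmannInv f)) z = f (Complex.exp (-(Complex.I * α)) * z) := by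
  obtain ⟨g, hg, hp⟩ := poly_rep p
  have hE : Continuous (fun θ : ℝ => Complex.exp (θ * Complex.I)) := by fun_prop
  have hf' : f = fun w => ∫ θ in cS, g θ * Complex.exp (Complex.exp (θ * Complex.I) * w) := by
    funext w
    rw [hf, hp]
  have h1 := funext (step1 g _ hg hE)
  have h2 := funext (step2 α hα g _ hg hE)
  rw [hf', h1, h2, step3 g _ hg (by fun_prop)]
  congr 1
  ext θ
  congr 2
  ring
end

section
/- Let α ∈ ℝ with sin α ≠ 0 and let f(x) = p(x) e^{-x²} where p is a complex polynomial. Then ∫_ℝ |F_α f(x)|² dx = ∫_ℝ |f(x)|² dx (Plancherel's formula for the fractional Fourier transform on this dense class of functions). -/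
open MeasureTheory Complex

lemma frft_mono_bound (k : ℕ) (x : ℝ) : |x| ^ k * Real.exp (-x ^ 2) ≤ 1 + (k.factorial : ℝ) := by
  have h1 : |x| ^ k ≤ 1 + (x ^ 2) ^ k := by
    have : (x ^ 2) ^ k = (|x| ^ k) ^ 2 := by rw [← sq_abs, ← pow_mul, ← pow_mul, mul_comm]
    rw [this]
    nlinarith [sq_nonneg (|x| ^ k - 1 / 2)]
  have h2 : (x ^ 2) ^ k ≤ (k.factorial : ℝ) * Real.exp (x ^ 2) := by
    have h := Real.pow_div_factorial_le_exp (x ^ 2) (sq_nonneg x) k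
    have hk : (0 : ℝ) < k.factorial := by exact_mod_cast k.factorial_pos
    rw [div_le_iff₀ hk] at h
    linarith
  have h3 : Real.exp (x ^ 2) * Real.exp (-x ^ 2) = 1 := by
    rw [← Real.exp_add]; simp
  have h4 : Real.exp (-x ^ 2) ≤ 1 := by
    rw [Real.exp_le_one_iff]; nlinarith [sq_nonneg x]
  have h5 := Real.exp_pos (-x ^ 2)
  calc |x| ^ k * Real.exp (-x ^ 2)
      ≤ (1 + (k.factorial : ℝ) * Real.exp (x ^ 2)) * Real.exp (-x ^ 2) := by
        gcongr; linarith
    _ = Real.exp (-x ^ 2) + k.factorial * (Real.exp (x ^ 2) * Real.exp (-x ^ 2)) := by ring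
    _ ≤ _ := by rw [h3]; linarith

lemma frft_poly_bound (q : Polynomial ℂ) (k : ℕ) :
    ∃ C : ℝ, ∀ x : ℝ, |x| ^ k * (‖q.eval (x : ℂ)‖ * Real.exp (-x ^ 2)) ≤ C := by
  induction q using Polynomial.induction_on' with
  | add p q hp hq =>
    obtain ⟨C, hC⟩ := hp
    obtain ⟨D, hD⟩ := hq
    refine ⟨C + D, fun x => ?_⟩
    refine le_trans ?_ (add_le_add (hC x) (hD x))
    rw [← mul_add, ← add_mul, Polynomial.eval_add]
    gcongr
    exact norm_add_le _ _
  | monomial n a =>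
    refine ⟨‖a‖ * (1 + ((k + n).factorial : ℝ)), fun x => ?_⟩
    rw [Polynomial.eval_monomial, norm_mul, norm_pow, Complex.norm_real, Real.norm_eq_abs]
    calc _ = ‖a‖ * (|x| ^ (k + n) * Real.exp (-x ^ 2)) := by ring
      _ ≤ _ := by gcongr; exact frft_mono_bound _ _

lemma frft_norm_exp (c x : ℝ) :
    ‖Complex.exp (-(1 - I * c) * (x : ℂ) ^ 2)‖ = Real.exp (-x ^ 2) := by
  rw [Complex.norm_exp]
  congr 1
  simp [← Complex.ofReal_pow]

lemma frft_hasDerivAt (b : ℂ) (q : Polynomial ℂ) (x : ℝ) :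
    HasDerivAt (fun x : ℝ => q.eval (x : ℂ) * Complex.exp (-b * (x : ℂ) ^ 2))
      ((q.derivative - Polynomial.C (2 * b) * Polynomial.X * q).eval (x : ℂ) *
        Complex.exp (-b * (x : ℂ) ^ 2)) x := by
  have h1 := q.hasDerivAt (x : ℂ)
  have h2 : HasDerivAt (fun z : ℂ => Complex.exp (-b * z ^ 2))
      (Complex.exp (-b * (x : ℂ) ^ 2) * (-b * (2 * x))) (x : ℂ) := by
    have := ((hasDerivAt_pow 2 (x : ℂ)).const_mul (-b)).cexp
    simpa using this
  have := (h1.mul h2).comp_ofReal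
  refine this.congr_deriv ?_
  simp
  ring

lemma frft_iteratedDeriv (b : ℂ) (n : ℕ) : ∀ q : Polynomial ℂ, ∃ r : Polynomial ℂ,
    iteratedDeriv n (fun x : ℝ => q.eval (x : ℂ) * Complex.exp (-b * (x : ℂ) ^ 2)) =
      fun x : ℝ => r.eval (x : ℂ) * Complex.exp (-b * (x : ℂ) ^ 2) := by
  induction n with
  | zero => exact fun q => ⟨q, by simp⟩
  | succ n ih =>
    intro q
    obtain ⟨r, hr⟩ := ih (q.derivative - Polynomial.C (2 * b) * Polynomial.X * q)
    refine ⟨r, ?_⟩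
    rw [iteratedDeriv_succ', ← hr]
    congr 1
    funext x
    exact (frft_hasDerivAt b q x).deriv

lemma frft_contDiff (b : ℂ) (q : Polynomial ℂ) (n : WithTop ℕ∞) :
    ContDiff ℝ n (fun x : ℝ => q.eval (x : ℂ) * Complex.exp (-b * (x : ℂ) ^ 2)) := by
  have h0 : ContDiff ℝ n (fun x : ℝ => (x : ℂ)) := Complex.ofRealCLM.contDiff
  have h1 : ContDiff ℝ n (fun z : ℂ => q.eval z) := by
    have := (q.contDiff_aeval (𝕜 := ℂ) n).restrict_scalars ℝ
    simpa using this
  exact (h1.comp h0).mul ((contDiff_const.mul (h0.pow 2)).cexp)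

noncomputable def frftSchwartz (c : ℝ) (q : Polynomial ℂ) : SchwartzMap ℝ ℂ where
  toFun := fun x : ℝ => q.eval (x : ℂ) * Complex.exp (-(1 - I * c) * (x : ℂ) ^ 2)
  smooth' := frft_contDiff _ _ _
  decay' := by
    intro k n
    obtain ⟨r, hr⟩ := frft_iteratedDeriv (1 - I * c) n q
    obtain ⟨C, hC⟩ := frft_poly_bound r k
    refine ⟨C, fun x => ?_⟩
    rw [norm_iteratedFDeriv_eq_norm_iteratedDeriv, hr, norm_mul, frft_norm_exp, Real.norm_eq_abs]
    exact hC x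

lemma frft_const (α : ℝ) (hα : Real.sin α ≠ 0) :
    ‖(1 - I * Real.cot α) ^ ((1:ℂ)/2)‖ ^ 2 = |Real.sin α|⁻¹ := by
  have h : ((1:ℂ)/2) = (((1/2 : ℝ)) : ℂ) := by push_cast; rfl
  rw [h, Complex.norm_cpow_real, ← Real.sqrt_eq_rpow, Real.sq_sqrt (norm_nonneg _)]
  have h2 : ‖1 - I * (Real.cot α : ℂ)‖ ^ 2 = (|Real.sin α|⁻¹) ^ 2 := by
    rw [← Complex.normSq_eq_norm_sq, Complex.normSq_apply]
    simp only [sub_re, one_re, mul_re, I_re, zero_mul, I_im, ofReal_im, mul_zero, sub_im, one_im,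
      mul_im, ofReal_re]
    rw [Real.cot_eq_cos_div_sin, inv_pow, sq_abs]
    field_simp
    nlinarith [Real.sin_sq_add_cos_sq α]
  exact (pow_left_inj₀ (norm_nonneg _) (by positivity) two_ne_zero).1 h2

/-- Plancherel's formula for the fractional Fourier transform on functions p(x)e^{-x²}. -/
theorem frft_plancherel (α : ℝ) (hα : Real.sin α ≠ 0) (p : Polynomial ℂ) (f : ℝ → ℂ)
    (hf : ∀ x : ℝ, f x = p.eval (x : ℂ) * Complex.exp (-(x:ℂ)^2)) :
    ∫ x : ℝ, ‖FrFT α f x‖^2 = ∫ x : ℝ, ‖f x‖^2 := by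
  set g := frftSchwartz (Real.cot α) p with hg
  have hgx : ∀ x : ℝ, g x = p.eval (x : ℂ) * Complex.exp (-(1 - I * Real.cot α) * (x : ℂ) ^ 2) :=
    fun x => rfl
  have hP := SchwartzMap.integral_norm_sq_fourier g
  have hfg : ∀ x, ‖f x‖ ^ 2 = ‖g x‖ ^ 2 := by
    intro x
    rw [hf, hgx, norm_mul, norm_mul, frft_norm_exp, Complex.norm_exp]
    simp [← Complex.ofReal_pow]
  have hpi := Real.pi_pos
  have hF : ∀ x : ℝ, ‖FrFT α f x‖ ^ 2 = (|Real.sin α|⁻¹ / Real.pi) *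
      ‖FourierTransform.fourier g (x / (Real.pi * Real.sin α))‖ ^ 2 := by
    intro x
    have hint : (∫ t : ℝ, Complex.exp (-2 * Complex.I * ((x:ℂ) * t * (((Real.sin α)⁻¹ : ℝ) : ℂ)
      - ((Real.cot α : ℂ) / 2) * (t:ℂ)^2)) * f t) =
        FourierTransform.fourier g (x / (Real.pi * Real.sin α)) := by
      rw [SchwartzMap.fourier_coe, Real.fourier_real_eq_integral_exp_smul]
      congr 1
      funext t
      rw [hf, hgx, smul_eq_mul, mul_left_comm, mul_left_comm (Complex.exp _), ← Complex.exp_add,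
        ← Complex.exp_add]
      congr 2
      have h1 : (Real.pi : ℂ) ≠ 0 := by exact_mod_cast hpi.ne'
      have h2 : ((Real.sin α : ℝ) : ℂ) ≠ 0 := by exact_mod_cast hα
      rw [show (-2 * Real.pi * t * (x / (Real.pi * Real.sin α)) : ℝ) =
        -2 * t * x * (Real.sin α)⁻¹ by field_simp]
      push_cast
      ring
    have hn : ‖Complex.exp (Complex.I * (x:ℂ)^2 * Real.cot α)‖ = 1 := by
      rw [show Complex.I * (x:ℂ)^2 * Real.cot α = ((x ^ 2 * Real.cot α : ℝ) : ℂ) * Complex.I by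
        push_cast; ring]
      exact Complex.norm_exp_ofReal_mul_I _
    rw [FrFT, hint, norm_mul, norm_mul, hn, mul_one, mul_pow, norm_div, div_pow, frft_const α hα,
      Complex.norm_real, Real.norm_eq_abs, sq_abs, Real.sq_sqrt hpi.le]
  simp_rw [hF, hfg]
  rw [integral_const_mul,
    Measure.integral_comp_div (fun y => ‖FourierTransform.fourier g y‖ ^ 2), hP, smul_eq_mul,
    abs_mul, abs_of_pos hpi]
  have : |Real.sin α| ≠ 0 := abs_ne_zero.2 hα
  field_simp
end

section
/- Let α ∈ ℝ with sin α ≠ 0 and let f(x) = p(x) e^{-x²} where p is a complex polynomial. Then for every x ∈ ℝ, F_{-α}(F_α f)(x) = f(x); that is, the inverse of the α-angle fractional Fourier transform is the (-α)-angle fractional Fourier transform. -/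
open MeasureTheory Complex

open scoped FourierTransform SchwartzMap ContDiff

/-- Polynomial times a complex Gaussian with decay `exp (-x²)`. -/
noncomputable def polyGauss (c : ℝ) (q : Polynomial ℂ) (t : ℝ) : ℂ :=
  q.eval (t : ℂ) * Complex.exp (-(1 - Complex.I * c) * (t : ℂ) ^ 2)

lemma polyGauss_hasDerivAt (c : ℝ) (q : Polynomial ℂ) (t : ℝ) :
    HasDerivAt (polyGauss c q)
      (polyGauss c (Polynomial.derivative q
        - Polynomial.C (2 * (1 - Complex.I * c)) * Polynomial.X * q) t) t := by
  have h1 : HasDerivAt (fun z : ℂ => q.eval z * Complex.exp (-(1 - Complex.I * c) * z ^ 2))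
      ((Polynomial.derivative q).eval (t : ℂ) * Complex.exp (-(1 - Complex.I * c) * (t : ℂ) ^ 2)
        + q.eval (t : ℂ) * (Complex.exp (-(1 - Complex.I * c) * (t : ℂ) ^ 2)
          * (-(1 - Complex.I * c) * (2 * (t : ℂ))))) (t : ℂ) := by
    have h2 : HasDerivAt (fun z : ℂ => -(1 - Complex.I * c) * z ^ 2)
        (-(1 - Complex.I * c) * (2 * (t : ℂ))) (t : ℂ) := by
      have := (hasDerivAt_pow 2 (t : ℂ)).const_mul (-(1 - Complex.I * (c : ℂ)))
      simpa using this
    exact (q.hasDerivAt (t : ℂ)).mul h2.cexp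
  have h3 := h1.comp_ofReal
  unfold polyGauss
  convert h3 using 1
  simp
  ring

lemma polyGauss_iteratedDeriv (c : ℝ) (n : ℕ) : ∀ q : Polynomial ℂ,
    ∃ r : Polynomial ℂ, iteratedDeriv n (polyGauss c q) = polyGauss c r := by
  induction n with
  | zero => intro q; exact ⟨q, by simp⟩
  | succ n ih =>
    intro q
    obtain ⟨r, hr⟩ := ih q
    refine ⟨Polynomial.derivative r
        - Polynomial.C (2 * (1 - Complex.I * c)) * Polynomial.X * r, ?_⟩
    rw [iteratedDeriv_succ, hr]
    funext t
    exact (polyGauss_hasDerivAt c r t).deriv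

lemma pow_mul_gauss_bound (n : ℕ) (x : ℝ) :
    |x| ^ n * Real.exp (-x ^ 2) ≤ 1 + n.factorial := by
  have h1 := Real.pow_div_factorial_le_exp (x ^ 2) (sq_nonneg x) n
  have hf : (0 : ℝ) < n.factorial := by positivity
  rw [div_le_iff₀ hf] at h1
  have h2 : (x ^ 2) ^ n = (|x| ^ n) ^ 2 := by
    rw [← sq_abs, ← pow_mul, ← pow_mul, mul_comm]
  have h3 : (1 : ℝ) ≤ Real.exp (x ^ 2) := Real.one_le_exp (sq_nonneg x)
  have h4 : |x| ^ n ≤ (1 + n.factorial) * Real.exp (x ^ 2) := by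
    nlinarith [sq_nonneg (|x| ^ n - 1)]
  rw [Real.exp_neg, ← div_eq_mul_inv, div_le_iff₀ (Real.exp_pos _)]
  exact h4

lemma polyGauss_bound (c : ℝ) (q : Polynomial ℂ) (k : ℕ) :
    ∃ C : ℝ, ∀ x : ℝ, |x| ^ k * ‖polyGauss c q x‖ ≤ C := by
  have hexp : ∀ x : ℝ, ‖Complex.exp (-(1 - Complex.I * c) * (x : ℂ) ^ 2)‖
      = Real.exp (-x ^ 2) := by
    intro x
    rw [Complex.norm_exp]
    congr 1
    have : (x : ℂ) ^ 2 = ((x ^ 2 : ℝ) : ℂ) := by push_cast; rfl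
    rw [this, Complex.re_mul_ofReal]
    simp
  induction q using Polynomial.induction_on' with
  | add p q hp hq =>
    obtain ⟨C, hC⟩ := hp
    obtain ⟨D, hD⟩ := hq
    refine ⟨C + D, fun x => ?_⟩
    have : polyGauss c (p + q) x = polyGauss c p x + polyGauss c q x := by
      simp [polyGauss, add_mul]
    rw [this]
    calc _ ≤ |x| ^ k * (‖polyGauss c p x‖ + ‖polyGauss c q x‖) := by
          gcongr; exact norm_add_le _ _
      _ ≤ _ := by rw [mul_add]; exact add_le_add (hC x) (hD x)
  | monomial n a =>
    refine ⟨‖a‖ * (1 + (k + n).factorial), fun x => ?_⟩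
    have := mul_le_mul_of_nonneg_left (pow_mul_gauss_bound (k + n) x) (norm_nonneg a)
    refine le_trans (le_of_eq ?_) this
    rw [polyGauss, norm_mul, hexp]
    simp [pow_add]
    ring

/-- `polyGauss` as a Schwartz function. -/
noncomputable def polyGaussS (c : ℝ) (q : Polynomial ℂ) : 𝓢(ℝ, ℂ) where
  toFun := polyGauss c q
  smooth' := by
    have h : Differentiable ℂ (fun z : ℂ => q.eval z * Complex.exp (-(1 - Complex.I * c) * z ^ 2)) := by
      intro z
      exact q.differentiableAt.mul (by fun_prop)
    have h2 : ContDiff ℝ ∞ (fun z : ℂ => q.eval z * Complex.exp (-(1 - Complex.I * c) * z ^ 2)) :=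
      h.contDiff.restrict_scalars ℝ
    exact h2.comp Complex.ofRealCLM.contDiff
  decay' := by
    intro k n
    obtain ⟨r, hr⟩ := polyGauss_iteratedDeriv c n q
    obtain ⟨C, hC⟩ := polyGauss_bound c r k
    refine ⟨C, fun x => ?_⟩
    rw [norm_iteratedFDeriv_eq_norm_iteratedDeriv, hr, Real.norm_eq_abs]
    exact hC x

lemma polyGauss_inv (c : ℝ) (q : Polynomial ℂ) (x : ℝ) :
    ∫ u : ℝ, Complex.exp (((2 * Real.pi * (u * x) : ℝ) : ℂ) * Complex.I) * 𝓕 (polyGauss c q) u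
      = polyGauss c q x := by
  have hcont : Continuous (polyGauss c q) := (polyGaussS c q).continuous
  have hint : Integrable (polyGauss c q) := (polyGaussS c q).integrable
  have hint2 : Integrable (𝓕 (polyGauss c q)) := (𝓕 (polyGaussS c q)).integrable
  have h := hcont.fourierInv_fourier_eq hint hint2
  have h2 := congrFun h x
  rw [Real.fourierInv_eq'] at h2
  rw [← h2]
  refine integral_congr_ae (Filter.Eventually.of_forall fun u => ?_)
  simp [mul_comm x u]

lemma sqrt_prod (α : ℝ) (hα : Real.sin α ≠ 0) :
    (1 - Complex.I * (Real.cot α : ℂ)) ^ ((1:ℂ)/2) * (1 + Complex.I * (Real.cot α : ℂ)) ^ ((1:ℂ)/2)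
      = ((|(Real.sin α)⁻¹| : ℝ) : ℂ) := by
  set c := Real.cot α with hc
  set z : ℂ := 1 - Complex.I * (c : ℂ) with hz
  have hconj : (1 + Complex.I * (c : ℂ)) = (starRingEnd ℂ) z := by
    simp [hz]
  have hre : 0 < z.re := by simp [hz]
  have harg : z.arg ≠ Real.pi := by
    intro h
    have := (Complex.arg_eq_pi_iff.mp h).1
    linarith
  have hz0 : z ≠ 0 := by
    intro h; rw [h] at hre; simp at hre
  have hhalf : (starRingEnd ℂ) ((1:ℂ)/2) = (1:ℂ)/2 := by
    rw [map_div₀, map_one, Complex.conj_ofNat]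
  have hsq : z ^ ((1:ℂ)/2) * z ^ ((1:ℂ)/2) = z := by
    rw [← Complex.cpow_add _ _ hz0]; norm_num
  rw [hconj, Complex.conj_cpow _ _ harg, hhalf, Complex.mul_conj]
  congr 1
  have hn : Complex.normSq (z ^ ((1:ℂ)/2)) ^ 2 = (|(Real.sin α)⁻¹|) ^ 2 := by
    rw [sq, ← Complex.normSq_mul, hsq, sq_abs]
    have : Complex.normSq z = 1 + c ^ 2 := by
      simp [hz, Complex.normSq_apply]; ring
    rw [this, hc, Real.cot_eq_cos_div_sin]
    have := Real.sin_sq_add_cos_sq α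
    field_simp
    linarith
  exact (pow_left_inj₀ (Complex.normSq_nonneg _) (abs_nonneg _) two_ne_zero).mp hn

/-- The inverse of the α-angle fractional Fourier transform is the (-α)-angle one:
F_{-α}(F_α f) = f on functions p(x)e^{-x²}. -/
theorem frft_inverse (α : ℝ) (hα : Real.sin α ≠ 0) (p : Polynomial ℂ) (f : ℝ → ℂ)
    (hf : ∀ x : ℝ, f x = p.eval (x : ℂ) * Complex.exp (-(x:ℂ)^2)) (x : ℝ) :
    FrFT (-α) (FrFT α f) x = f x := by
  set c := Real.cot α with hc
  set s := (Real.sin α)⁻¹ with hs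
  have hs0 : s ≠ 0 := inv_ne_zero hα
  have hpi : (Real.pi : ℂ) ≠ 0 := by exact_mod_cast Real.pi_ne_zero
  have hcneg : Real.cot (-α) = -c := by
    rw [hc, Real.cot_eq_cos_div_sin, Real.cot_eq_cos_div_sin, Real.cos_neg, Real.sin_neg, div_neg]
  have hsneg : (Real.sin (-α))⁻¹ = -s := by
    rw [hs, Real.sin_neg, inv_neg]
  set A : ℂ := (1 - Complex.I * (c : ℂ)) ^ ((1:ℂ)/2) with hA
  set B : ℂ := (1 + Complex.I * (c : ℂ)) ^ ((1:ℂ)/2) with hB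
  have hAB : A * B = ((|s| : ℝ) : ℂ) := sqrt_prod α hα
  have h1 : ∀ t : ℝ, FrFT α f t = (A / (Real.sqrt Real.pi : ℂ)) *
      Complex.exp (Complex.I * (t:ℂ)^2 * c) * 𝓕 (polyGauss c p) (s / Real.pi * t) := by
    intro t
    rw [FrFT, Real.fourier_real_eq_integral_exp_smul, ← hc, ← hs]
    congr 1
    refine integral_congr_ae (Filter.Eventually.of_forall fun u => ?_)
    simp only [hf, polyGauss, smul_eq_mul]
    rw [mul_left_comm, ← Complex.exp_add, mul_left_comm, ← Complex.exp_add]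
    congr 2
    push_cast
    field_simp
    ring
  have h2 : ∀ t : ℝ, Complex.exp (-2 * Complex.I * ((x:ℂ) * t * (((Real.sin (-α))⁻¹ : ℝ) : ℂ)
      - ((Real.cot (-α) : ℂ) / 2) * (t:ℂ)^2)) * FrFT α f t
      = (A / (Real.sqrt Real.pi : ℂ)) * (fun u : ℝ =>
        Complex.exp (((2 * Real.pi * (u * x) : ℝ) : ℂ) * Complex.I) * 𝓕 (polyGauss c p) u)
          (s / Real.pi * t) := by
    intro t
    rw [h1, hcneg, hsneg]
    have : Complex.exp (((2 * Real.pi * ((s / Real.pi * t) * x) : ℝ) : ℂ) * Complex.I)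
        = Complex.exp (-2 * Complex.I * ((x:ℂ) * t * ((-s : ℝ) : ℂ)
      - (((-c : ℝ) : ℂ) / 2) * (t:ℂ)^2)) * Complex.exp (Complex.I * (t:ℂ)^2 * c) := by
      rw [← Complex.exp_add]
      congr 1
      push_cast
      field_simp
      ring
    simp only [this]
    ring
  rw [FrFT]
  rw [integral_congr_ae (Filter.Eventually.of_forall h2), integral_const_mul,
    Measure.integral_comp_mul_left (fun u : ℝ =>
      Complex.exp (((2 * Real.pi * (u * x) : ℝ) : ℂ) * Complex.I) * 𝓕 (polyGauss c p) u),
    polyGauss_inv, hcneg, hf]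
  have hB' : (1 - Complex.I * ((-c : ℝ) : ℂ)) ^ ((1:ℂ)/2) = B := by
    rw [hB]; congr 1; push_cast; ring
  have hexp : Complex.exp (Complex.I * (x:ℂ)^2 * ((-c : ℝ) : ℂ)) * polyGauss c p x
      = p.eval (x : ℂ) * Complex.exp (-(x:ℂ)^2) := by
    rw [polyGauss, mul_left_comm, ← Complex.exp_add]
    congr 2
    push_cast
    ring
  have habs : |(s / Real.pi)⁻¹| * |s| = Real.pi := by
    rw [abs_inv, abs_div, abs_of_pos Real.pi_pos]
    have : |s| ≠ 0 := abs_ne_zero.mpr hs0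
    field_simp
  have hsq : (Real.sqrt Real.pi : ℂ) * (Real.sqrt Real.pi : ℂ) = Real.pi := by
    exact_mod_cast Real.mul_self_sqrt Real.pi_pos.le
  have hsq0 : (Real.sqrt Real.pi : ℂ) ≠ 0 := by
    intro h; rw [h, mul_zero] at hsq; exact hpi hsq.symm
  have habs' : ((|(s / Real.pi)⁻¹| : ℝ) : ℂ) * ((|s| : ℝ) : ℂ) = Real.pi := by
    exact_mod_cast habs
  rw [hB', ← hexp, Complex.real_smul]
  generalize Complex.exp (Complex.I * (x:ℂ)^2 * ((-c : ℝ) : ℂ)) = E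
  generalize polyGauss c p x = G
  calc _ = (((|(s / Real.pi)⁻¹| : ℝ) : ℂ) * (A * B))
        / ((Real.sqrt Real.pi : ℂ) * (Real.sqrt Real.pi : ℂ)) * (E * G) := by
        field_simp
    _ = E * G := by rw [hAB, habs', hsq, div_self hpi, one_mul]
end

section
/- Let α ∈ ℝ with sin α ≠ 0 and let n ≥ 0 be an integer. Then for every x ∈ ℝ, F_α h_n(x) = e^{-inα} h_n(x); that is, the n-th Hermite function is an eigenvector of the α-angle fractional Fourier transform with eigenvalue e^{-inα}. -/
open MeasureTheory Complex

/-- The physicists' Hermite polynomial H_n(x) = (-1)ⁿ e^{x²} (dⁿ/dxⁿ) e^{-x²}. -/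
noncomputable def physHermite (n : ℕ) (x : ℝ) : ℝ :=
  (-1)^n * Real.exp (x^2) * deriv^[n] (fun y : ℝ => Real.exp (-y^2)) x

/-- The n-th Hermite function h_n(x) = (2/π)^{1/4} (2ⁿ n!)^{-1/2} e^{-x²} H_n(√2 x). -/
noncomputable def hermiteFun (n : ℕ) (x : ℝ) : ℝ :=
  (2 / Real.pi) ^ ((1:ℝ)/4) * (Real.sqrt (2^n * n.factorial))⁻¹ *
    Real.exp (-x^2) * physHermite n (Real.sqrt 2 * x)

open Polynomial in
/-- Physicists' Hermite polynomials, recursively. -/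
noncomputable def hPoly : ℕ → ℝ[X]
  | 0 => 1
  | n + 1 => 2 * X * hPoly n - derivative (hPoly n)

open Polynomial in
lemma hPoly_deriv (n : ℕ) : derivative (hPoly (n + 1)) = (2 * (n + 1 : ℝ[X])) * hPoly n := by
  induction n with
  | zero => simp [hPoly]
  | succ n ih =>
    rw [hPoly, derivative_sub, ih]
    have h2 : hPoly (n + 1) = 2 * X * hPoly n - derivative (hPoly n) := rfl
    simp only [derivative_mul, ih, derivative_X, derivative_ofNat, derivative_natCast,
      derivative_add, derivative_one]
    rw [h2]
    push_cast
    ring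

lemma gauss_iter (n : ℕ) (x : ℝ) : deriv^[n] (fun y : ℝ => Real.exp (-y^2)) x =
    (-1)^n * (hPoly n).eval x * Real.exp (-x^2) := by
  induction n generalizing x with
  | zero => simp [hPoly]
  | succ n ih =>
    replace ih : deriv^[n] _ = _ := _root_.funext ih
    rw [Function.iterate_succ_apply', ih]
    have h1 : HasDerivAt (fun x : ℝ => Real.exp (-x^2)) (Real.exp (-x^2) * (-(2 * x))) x := by
      simpa using ((hasDerivAt_pow 2 x).neg).exp
    have h2 := ((((hPoly n).hasDerivAt x).const_mul ((-1:ℝ)^n)).mul h1).deriv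
    refine Eq.trans h2 ?_
    simp [hPoly]
    ring

lemma physHermite_eq (n : ℕ) (x : ℝ) : physHermite n x = (hPoly n).eval x := by
  rw [physHermite, gauss_iter]
  have h : Real.exp (x^2) * Real.exp (-x^2) = 1 := by rw [← Real.exp_add]; simp
  have h' : ((-1:ℝ)^n) * (-1)^n = 1 := by rw [← mul_pow]; simp
  linear_combination (hPoly n).eval x * ((-1:ℝ)^n) * (-1)^n * h + (hPoly n).eval x * h'

lemma poly_gauss_integrable (b c : ℂ) (hb : b.re = 1) (hc : c.re = 0) (q : Polynomial ℝ) :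
    Integrable (fun t : ℝ => ((q.eval t : ℝ) : ℂ) * cexp (-b * t^2 + c * t)) := by
  induction q using Polynomial.induction_on' with
  | add p q hp hq =>
    refine (hp.add hq).congr (Filter.Eventually.of_forall fun t => ?_)
    simp [add_mul]
  | monomial n a =>
    have h := (integrable_rpow_mul_exp_neg_mul_sq (b := 1) one_pos
      (s := (n:ℝ)) (by have : (0:ℝ) ≤ n := n.cast_nonneg
                       linarith)).const_mul a
    refine Integrable.mono h (by fun_prop) (Filter.Eventually.of_forall fun t => ?_)
    have : (-b * t^2 + c * t).re = -1 * t^2 := by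
      simp [hb, hc, sq]
    rw [norm_mul, Complex.norm_exp, this]
    simp [abs_mul, mul_assoc]

lemma ibp_aux (b c : ℂ) (f1 f2 f3 : ℝ → ℂ) (i1 : Integrable f1) (i2 : Integrable f2)
    (i3 : Integrable f3)
    (h : ∀ t, HasDerivAt f3 (f2 t + c * f3 t - 2 * b * f1 t) t) :
    2 * b * ∫ t, f1 t = (∫ t, f2 t) + c * ∫ t, f3 t := by
  have i23 : Integrable (fun t => f2 t + c * f3 t) := i2.add (i3.const_mul c)
  have i1' := i1.const_mul (2 * b)
  have key := integral_eq_zero_of_hasDerivAt_of_integrable h (i23.sub i1') i3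
  rw [integral_sub i23 i1', integral_add i2 (i3.const_mul c), integral_const_mul,
    integral_const_mul] at key
  linear_combination -key

lemma J_rec (b c : ℂ) (hb : b.re = 1) (hc : c.re = 0) (q : Polynomial ℝ) :
    2 * b * ∫ t : ℝ, (((Polynomial.X * q).eval t : ℝ) : ℂ) * cexp (-b * t^2 + c * t) =
    (∫ t : ℝ, (((Polynomial.derivative q).eval t : ℝ) : ℂ) * cexp (-b * t^2 + c * t)) +
    c * ∫ t : ℝ, ((q.eval t : ℝ) : ℂ) * cexp (-b * t^2 + c * t) := by
  have i1 := poly_gauss_integrable b c hb hc (Polynomial.X * q)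
  have i2 := poly_gauss_integrable b c hb hc (Polynomial.derivative q)
  have i3 := poly_gauss_integrable b c hb hc q
  refine ibp_aux b c _ _ _ i1 i2 i3 (fun t => ?_)
  have h0 : HasDerivAt (fun t : ℝ => (t:ℂ)) 1 t := (hasDerivAt_id t).ofReal_comp
  have h1 : HasDerivAt (fun t : ℝ => -b * (t:ℂ)^2 + c * t) (-b * (2 * t) + c) t := by
    refine (((h0.pow 2).const_mul (-b)).add (h0.const_mul c)).congr_deriv ?_
    simp
  have h2 := ((q.hasDerivAt t).ofReal_comp).mul h1.cexp
  refine h2.congr_deriv ?_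
  simp only [Polynomial.eval_mul, Polynomial.eval_X, Complex.ofReal_mul]
  ring

/-- The rescaled polynomial `H_n(√2 t)`. -/
noncomputable def sPoly (n : ℕ) : Polynomial ℝ :=
  (hPoly n).comp (Polynomial.C (Real.sqrt 2) * Polynomial.X)

lemma c2 : (Polynomial.C (2:ℝ)) = 2 := rfl

lemma sPoly_deriv (n : ℕ) : Polynomial.derivative (sPoly (n + 1)) =
    Polynomial.C (Real.sqrt 2 * (2 * (n + 1))) * sPoly n := by
  simp [sPoly, Polynomial.derivative_comp, hPoly_deriv, c2]
  ring

lemma sPoly_rec (n : ℕ) : sPoly (n + 2) = Polynomial.C (2 * Real.sqrt 2) * (Polynomial.X * sPoly (n+1))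
    - Polynomial.C (2 * (n + 1 : ℝ)) * sPoly n := by
  have : hPoly (n + 2) = 2 * Polynomial.X * hPoly (n+1) - (2 * (n + 1 : Polynomial ℝ)) * hPoly n := by
    rw [← hPoly_deriv]; rfl
  simp [sPoly, this, c2]
  ring

lemma J_eval (b c L : ℂ) (x : ℝ) (hb : b.re = 1) (hc : c.re = 0)
    (hbc : c = b * (2 * x * L)) (hbl : 2 - b = -b * L^2) (n : ℕ) :
    (∫ t : ℝ, (((sPoly n).eval t : ℝ) : ℂ) * cexp (-b * t^2 + c * t)) =
    L^n * ((sPoly n).eval x : ℝ) * ∫ t : ℝ, cexp (-b * t^2 + c * t) := by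
  have hb0 : b ≠ 0 := by rintro rfl; simp at hb
  have hs : ((Real.sqrt 2 : ℝ) : ℂ)^2 = 2 := by
    rw [← Complex.ofReal_pow, Real.sq_sqrt (by norm_num)]; simp
  induction n using Nat.twoStepInduction with
  | zero => simp [sPoly, hPoly]
  | one =>
    have h := J_rec b c hb hc 1
    have e : ∀ t : ℝ, (((sPoly 1).eval t : ℝ) : ℂ) * cexp (-b * t^2 + c * t) =
      2 * (Real.sqrt 2 : ℂ) * ((((Polynomial.X * 1 : Polynomial ℝ).eval t : ℝ) : ℂ) *
        cexp (-b * t^2 + c * t)) := by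
      intro t; simp [sPoly, hPoly]; ring
    simp_rw [e]
    rw [integral_const_mul]
    have h3 : (sPoly 1).eval x = 2 * Real.sqrt 2 * x := by simp [sPoly, hPoly]; ring
    rw [h3]
    simp only [Polynomial.derivative_one, Polynomial.eval_zero, Polynomial.eval_one,
      Complex.ofReal_zero, Complex.ofReal_one, zero_mul, one_mul, integral_zero] at h
    apply mul_left_cancel₀ hb0
    push_cast
    rw [hbc] at h ⊢
    linear_combination (Real.sqrt 2 : ℂ) * h
  | more n ih0 ih1 =>
    have h := J_rec b c hb hc (sPoly (n+1))
    have i1 := poly_gauss_integrable b c hb hc (Polynomial.X * sPoly (n+1))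
    have i0 := poly_gauss_integrable b c hb hc (sPoly n)
    have e : ∀ t : ℝ, (((sPoly (n+2)).eval t : ℝ) : ℂ) * cexp (-b * t^2 + c * t) =
      2 * (Real.sqrt 2 : ℂ) * ((((Polynomial.X * sPoly (n+1) : Polynomial ℝ).eval t : ℝ) : ℂ) *
        cexp (-b * t^2 + c * t)) - 2 * (n+1 : ℂ) * ((((sPoly n).eval t : ℝ) : ℂ) *
        cexp (-b * t^2 + c * t)) := by
      intro t; rw [sPoly_rec]; simp; ring
    have e2 : ∀ t : ℝ, (((Polynomial.derivative (sPoly (n+1))).eval t : ℝ) : ℂ) *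
        cexp (-b * t^2 + c * t) = (Real.sqrt 2 : ℂ) * (2 * (n + 1 : ℂ)) *
          ((((sPoly n).eval t : ℝ) : ℂ) * cexp (-b * t^2 + c * t)) := by
      intro t; rw [sPoly_deriv]; simp; ring
    simp_rw [e2] at h
    simp_rw [e]
    rw [integral_const_mul, ih0, ih1] at h
    rw [integral_sub (i1.const_mul _) (i0.const_mul _), integral_const_mul, integral_const_mul, ih0]
    have h3 : (((sPoly (n+2)).eval x : ℝ) : ℂ) = 2 * (Real.sqrt 2 : ℂ) * (x * ((sPoly (n+1)).eval x : ℝ))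
        - 2 * (n+1 : ℂ) * ((sPoly n).eval x : ℝ) := by
      rw [sPoly_rec]; simp
    rw [h3]
    generalize (((sPoly n).eval x : ℝ) : ℂ) = p0 at *
    generalize (((sPoly (n+1)).eval x : ℝ) : ℂ) = p1 at *
    generalize (∫ t : ℝ, cexp (-b * t^2 + c * t)) = G at *
    generalize (∫ t : ℝ, (((Polynomial.X * sPoly (n+1) : Polynomial ℝ).eval t : ℝ) : ℂ) *
        cexp (-b * t^2 + c * t)) = M at *
    apply mul_left_cancel₀ hb0
    linear_combination (Real.sqrt 2 : ℂ) * h + 2 * (n+1) * L^n * p0 * G * hs +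
      (Real.sqrt 2 : ℂ) * L^(n+1) * p1 * G * hbc + 2 * (n+1) * L^n * p0 * G * hbl

lemma sqrt_part (b : ℂ) (hb : b.re = 1) :
    b ^ ((1:ℂ)/2) / (Real.sqrt Real.pi : ℂ) * (Real.pi / b) ^ ((1:ℂ)/2) = 1 := by
  have hb0 : b ≠ 0 := by rintro rfl; simp at hb
  have hpi : ((Real.sqrt Real.pi : ℝ) : ℂ) ≠ 0 := by
    simp [Real.sqrt_eq_zero', Real.pi_pos]
  have harg : b.arg ≠ Real.pi := by
    intro h
    rw [Complex.arg_eq_pi_iff] at h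
    linarith [h.1]
  have hs : ((Real.pi : ℝ) : ℂ) ^ ((1:ℂ)/2) = (Real.sqrt Real.pi : ℝ) := by
    rw [Real.sqrt_eq_rpow, Complex.ofReal_cpow Real.pi_pos.le]; simp
  have hbn : b ^ ((1:ℂ)/2) ≠ 0 := by simp [Complex.cpow_eq_zero_iff, hb0]
  have hmul : ((Real.pi : ℂ) * b⁻¹) ^ ((1:ℂ)/2) = (Real.pi : ℂ) ^ ((1:ℂ)/2) * b⁻¹ ^ ((1:ℂ)/2) := by
    have hp : (Real.pi : ℂ) ≠ 0 := by exact_mod_cast Real.pi_ne_zero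
    rw [Complex.cpow_def_of_ne_zero (mul_ne_zero hp (inv_ne_zero hb0)),
      Complex.cpow_def_of_ne_zero hp, Complex.cpow_def_of_ne_zero (inv_ne_zero hb0),
      Complex.log_ofReal_mul Real.pi_pos (inv_ne_zero hb0), ← Complex.exp_add,
      Complex.ofReal_log Real.pi_pos.le, add_mul]
  rw [div_eq_mul_inv (Real.pi : ℂ), hmul, Complex.inv_cpow _ _ harg, hs]
  field_simp

/-- The n-th Hermite function is an eigenvector of F_α with eigenvalue e^{-inα}. -/
theorem frft_hermite_eigen (α : ℝ) (hα : Real.sin α ≠ 0) (n : ℕ) (x : ℝ) :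
    FrFT α (fun t => ((hermiteFun n t : ℝ) : ℂ)) x =
      Complex.exp (-(Complex.I * n * α)) * ((hermiteFun n x : ℝ) : ℂ) := by
  set b : ℂ := 1 - Complex.I * Real.cot α with hbdef
  set c : ℂ := -2 * Complex.I * x * (((Real.sin α)⁻¹ : ℝ) : ℂ) with hcdef
  set L : ℂ := cexp (-(Complex.I * α)) with hLdef
  have hb : b.re = 1 := by simp [hbdef, -Complex.ofReal_cot]
  have hc : c.re = 0 := by simp [hcdef]
  have hb0 : b ≠ 0 := by intro h; rw [h] at hb; simp at hb
  have hL : L = Real.cos α - Real.sin α * I := by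
    rw [hLdef, show -(Complex.I * (α:ℂ)) = ((-α : ℝ) : ℂ) * I by push_cast; ring, Complex.exp_mul_I]
    push_cast
    simp [sub_eq_add_neg]
  have hsn : ((Real.sin α : ℝ) : ℂ) ≠ 0 := by exact_mod_cast hα
  have hcs : ((Real.sin α : ℝ) : ℂ)^2 + ((Real.cos α : ℝ) : ℂ)^2 = 1 := by
    exact_mod_cast Real.sin_sq_add_cos_sq α
  have hcot : ((Real.cot α : ℝ) : ℂ) = (Real.cos α : ℝ) / (Real.sin α : ℝ) := by
    rw [Real.cot_eq_cos_div_sin]; push_cast; rfl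
  have hbL : b * L = -I * ((Real.sin α : ℝ) : ℂ)⁻¹ := by
    rw [hbdef, hL, hcot]
    field_simp
    linear_combination (-I) * hcs + (Real.cos α : ℂ) * (Real.sin α : ℂ) * I_sq
  have hbc : c = b * (2 * x * L) := by
    rw [hcdef]; push_cast at *
    linear_combination (-2 * (x:ℂ)) * hbL
  have hbl : 2 - b = -b * L^2 := by
    have : -b * L^2 = I * ((Real.sin α : ℝ) : ℂ)⁻¹ * L := by linear_combination (-L) * hbL
    rw [this, hL, hbdef, hcot]
    field_simp
    linear_combination (Real.sin α : ℂ) * I_sq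
  have hG : ∫ t : ℝ, cexp (-b * t^2 + c * t) = (Real.pi / b) ^ ((1:ℂ)/2) *
      cexp (c^2 / (4 * b)) := by
    have := integral_cexp_quadratic (b := -b) (by simp [hb]) c 0
    simp only [add_zero, neg_neg, zero_sub] at this
    rw [this]
    congr 2
    field_simp
  have hexp : Complex.I * (x:ℂ)^2 * Real.cot α + c^2 / (4 * b) = -(x:ℂ)^2 := by
    have h1 : Complex.I * Real.cot α = 1 - b := by rw [hbdef]; ring
    have h2 : c^2 / (4 * b) = x^2 * (b - 2) := by
      have h3 : c^2 / (4 * b) = x^2 * (b * L^2) := by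
        rw [hbc, div_eq_iff (mul_ne_zero (by norm_num) hb0)]; ring
      rw [h3]; linear_combination ((x:ℂ)^2) * hbl
    rw [h2]; linear_combination (x:ℂ)^2 * h1
  set A : ℝ := (2 / Real.pi) ^ ((1:ℝ)/4) * (Real.sqrt (2^n * n.factorial))⁻¹ with hA
  have hH : ∀ t : ℝ, ((hermiteFun n t : ℝ) : ℂ) = A * cexp (-(t:ℂ)^2) * ((sPoly n).eval t : ℝ) := by
    intro t
    rw [hermiteFun, physHermite_eq, ← hA]
    simp [sPoly]
  have hint : ∀ t : ℝ, cexp (-2 * Complex.I * ((x:ℂ) * t * (((Real.sin α)⁻¹ : ℝ) : ℂ)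
      - ((Real.cot α : ℂ) / 2) * (t:ℂ)^2)) * ((hermiteFun n t : ℝ) : ℂ) =
      A * ((((sPoly n).eval t : ℝ) : ℂ) * cexp (-b * t^2 + c * t)) := by
    intro t
    rw [hH, show -b * (t:ℂ)^2 + c * t = -2 * Complex.I * ((x:ℂ) * t * (((Real.sin α)⁻¹ : ℝ) : ℂ)
      - ((Real.cot α : ℂ) / 2) * (t:ℂ)^2) + -(t:ℂ)^2 by rw [hbdef, hcdef]; ring, Complex.exp_add]
    ring
  have hLn : cexp (-(Complex.I * n * α)) = L^n := by
    rw [hLdef, ← Complex.exp_nat_mul]; congr 1; ring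
  unfold FrFT
  simp_rw [hint]
  rw [integral_const_mul, J_eval b c L x hb hc hbc hbl n, hG, hLn, hH, ← hexp, Complex.exp_add,
    ← hbdef]
  linear_combination (A * L^n * (((sPoly n).eval x : ℝ) : ℂ) *
    cexp (Complex.I * (x:ℂ)^2 * Real.cot α) * cexp (c^2 / (4 * b))) * sqrt_part b hb
end

section
/- Let α, φ ∈ ℝ with sin α ≠ 0 and let f : ℂ → ℂ be a polynomial function. Then for every z ∈ ℂ, B(H^α_φ(B⁻¹f))(z) = (1/√π) ∫_ℂ f(w) e^{z w̄} A_φ((e^{iα} z + e^{-iα} w̄)/√2) dλ(w). -/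
open MeasureTheory Complex

/-- The Heaviside step function. -/
noncomputable def heaviside (x : ℝ) : ℝ := if 0 ≤ x then 1 else 0

/-- The fractional Hilbert transform H^α_φ f = F_{-α}[x ↦ (e^{-iφ}h(x) + e^{iφ}h(-x)) F_α f(x)]. -/
noncomputable def fracHilbert (α φ : ℝ) (f : ℝ → ℂ) : ℝ → ℂ :=
  FrFT (-α) (fun x =>
    (Complex.exp (-(Complex.I * φ)) * ((heaviside x : ℝ) : ℂ)
      + Complex.exp (Complex.I * φ) * ((heaviside (-x) : ℝ) : ℂ)) * FrFT α f x)

/-- ∫₀^z e^{-u²} du, the integral of the entire function e^{-u²} along the segment from 0 to z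
(which equals the integral along any path from 0 to z). -/
noncomputable def erfInt (z : ℂ) : ℂ :=
  ∫ t in (0:ℝ)..1, z * Complex.exp (-((t:ℂ) * z)^2)

/-- A_φ(z) = √π cos φ - 2i sin φ ∫₀^z e^{-u²} du. -/
noncomputable def Aphi (φ : ℝ) (z : ℂ) : ℂ :=
  (Real.sqrt Real.pi : ℂ) * ((Real.cos φ : ℝ) : ℂ) - 2 * Complex.I * ((Real.sin φ : ℝ) : ℂ) * erfInt z


/-! ### Auxiliary lemmas -/

/-- The Bargmann kernel. -/
noncomputable def kB (x : ℝ) (a : ℂ) : ℂ := Complex.exp (2*x*a - (x:ℂ)^2 - a^2/2)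

lemma kB_bound (x : ℝ) (a : ℂ) :
    ‖kB x a‖ ≤ Real.exp (-(1/5) * x^2) * Real.exp (3/4 * ‖a‖^2) := by
  rw [kB, Complex.norm_exp, ← Real.exp_add, Real.exp_le_exp, ← Complex.normSq_eq_norm_sq,
    Complex.normSq_apply]
  simp [pow_two]
  nlinarith [sq_nonneg (4*x - 5*a.re), sq_nonneg a.im]

lemma kB_cont : Continuous (fun q : ℝ × ℂ => kB q.1 q.2) := by
  unfold kB
  fun_prop

lemma poly_bound (p : Polynomial ℂ) :
    ∃ C : ℝ, 0 ≤ C ∧ ∀ w : ℂ, ‖p.eval w‖ ≤ C * Real.exp (1/8 * ‖w‖^2) := by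
  refine ⟨∑ i ∈ p.support, ‖p.coeff i‖ * (i.factorial * Real.exp 2), by positivity, fun w => ?_⟩
  rw [Polynomial.eval_eq_sum, Polynomial.sum, Finset.sum_mul]
  refine (norm_sum_le _ _).trans (Finset.sum_le_sum fun i _ => ?_)
  rw [norm_mul, norm_pow, mul_assoc, mul_assoc, ← Real.exp_add]
  gcongr
  have h1 := Real.pow_div_factorial_le_exp _ (norm_nonneg w) i
  rw [div_le_iff₀ (by positivity)] at h1
  rw [mul_comm]
  refine h1.trans ?_
  gcongr
  nlinarith [sq_nonneg (‖w‖ - 4)]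

lemma gauss_integrable_C (b : ℝ) (hb : 0 < b) :
    Integrable (fun w : ℂ => Real.exp (-b * ‖w‖^2)) := by
  have h := (GaussianFourier.integrable_cexp_neg_mul_sq_norm_add (V := ℂ) (b := (b:ℂ))
    (by simpa using hb) 0 0).norm
  refine h.congr (Filter.Eventually.of_forall fun w => ?_)
  simp only [Complex.norm_exp]
  congr 1
  simp [← Complex.ofReal_pow, ← Complex.ofReal_mul, ← Complex.ofReal_neg]

lemma cexp_norm (w : ℂ) : ‖Complex.exp (-(‖w‖ : ℂ)^2)‖ = Real.exp (-‖w‖^2) := by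
  rw [Complex.norm_exp]
  congr 1
  rw [← Complex.ofReal_pow, ← Complex.ofReal_neg, Complex.ofReal_re]

/-- Master integrability lemma. -/
lemma master_integrable (p : Polynomial ℂ) (m : ℝ × ℂ → ℂ) (M : ℝ)
    (hm : AEStronglyMeasurable m (volume.prod volume)) (hM : ∀ q, ‖m q‖ ≤ M)
    (u : ℂ) (hu : ‖u‖ = 1) :
    Integrable (fun q : ℝ × ℂ => m q * (p.eval q.2 * kB q.1 (u * starRingEnd ℂ q.2)
      * Complex.exp (-(‖q.2‖ : ℂ)^2))) (volume.prod volume) := by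
  obtain ⟨C, hC, hp⟩ := poly_bound p
  have hdom : Integrable (fun q : ℝ × ℂ => Real.exp (-(1/5) * q.1^2) *
      (C * Real.exp (-(1/8) * ‖q.2‖^2))) (volume.prod volume) :=
    (integrable_exp_neg_mul_sq (by norm_num)).mul_prod
      ((gauss_integrable_C (1/8) (by norm_num)).const_mul C)
  refine Integrable.bdd_mul (c := M) ?_ hm (Filter.Eventually.of_forall hM)
  refine hdom.mono' ?_ (Filter.Eventually.of_forall fun q => ?_)
  · apply Continuous.aestronglyMeasurable
    have h1 : Continuous (fun q : ℝ × ℂ => kB q.1 (u * starRingEnd ℂ q.2)) := by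
      unfold kB
      have := Complex.continuous_conj
      fun_prop
    have h2 : Continuous (fun q : ℝ × ℂ => p.eval q.2) := p.continuous.comp continuous_snd
    fun_prop
  · rw [norm_mul, norm_mul, cexp_norm]
    have hk := kB_bound q.1 (u * starRingEnd ℂ q.2)
    have hn : ‖u * starRingEnd ℂ q.2‖ = ‖q.2‖ := by simp [hu]
    rw [hn] at hk
    calc _ ≤ (C * Real.exp (1/8 * ‖q.2‖^2)) *
          (Real.exp (-(1/5) * q.1^2) * Real.exp (3/4 * ‖q.2‖^2)) * Real.exp (-‖q.2‖^2) := by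
            gcongr
            exact hp _
      _ = Real.exp (-(1/5) * q.1^2) * (C * (Real.exp (1/8 * ‖q.2‖^2) *
            Real.exp (3/4 * ‖q.2‖^2) * Real.exp (-‖q.2‖^2))) := by ring
      _ = _ := by
            rw [← Real.exp_add, ← Real.exp_add]
            congr 4
            ring

/-- The chirp kernel of the fractional Fourier transform. -/
noncomputable def kF (α : ℝ) (x t : ℝ) : ℂ :=
  Complex.exp (Complex.I * (x:ℂ)^2 * Real.cot α) *
  Complex.exp (-2 * Complex.I * ((x:ℂ) * t * (((Real.sin α)⁻¹ : ℝ) : ℂ)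
      - ((Real.cot α : ℂ) / 2) * (t:ℂ)^2))

lemma kF_symm (α x t : ℝ) : kF α x t = kF α t x := by
  unfold kF
  rw [← Complex.exp_add, ← Complex.exp_add]
  congr 1
  ring

lemma kF_norm (α x t : ℝ) : ‖kF α x t‖ = 1 := by
  unfold kF
  rw [← Complex.exp_add]
  have : (Complex.I * (x:ℂ)^2 * Real.cot α + -2 * Complex.I * ((x:ℂ) * t * (((Real.sin α)⁻¹ : ℝ) : ℂ)
      - ((Real.cot α : ℂ) / 2) * (t:ℂ)^2)) = ((x^2 * Real.cot α - 2 * (x * t * (Real.sin α)⁻¹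
      - Real.cot α / 2 * t^2) : ℝ) : ℂ) * Complex.I := by
    push_cast
    ring
  rw [this, Complex.norm_exp_ofReal_mul_I]

lemma kF_cont (α : ℝ) : Continuous (fun q : ℝ × ℝ => kF α q.1 q.2) := by
  unfold kF
  fun_prop

noncomputable def cF (α : ℝ) : ℂ :=
  ((1 - Complex.I * Real.cot α) ^ ((1:ℂ)/2) / (Real.sqrt Real.pi : ℂ))

lemma FrFT_eq (α : ℝ) (f : ℝ → ℂ) (x : ℝ) :
    FrFT α f x = cF α * ∫ t : ℝ, kF α x t * f t := by
  unfold FrFT cF kF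
  rw [mul_assoc]
  congr 1
  rw [← integral_const_mul]
  congr 1
  ext t
  ring

lemma cpow_aux (q : ℂ) (hq : 0 < q.re) :
    q ^ ((1:ℂ)/2) / (Real.sqrt Real.pi : ℂ) * ((Real.pi : ℂ) / q) ^ ((1:ℂ)/2) = 1 := by
  have hq0 : q ≠ 0 := by
    rintro rfl
    simp at hq
  have harg : q.arg ≠ Real.pi := by
    intro h
    rw [Complex.arg_eq_pi_iff] at h
    linarith [h.1]
  have hpi : ((Real.pi : ℂ)) ^ ((1:ℂ)/2) = (Real.sqrt Real.pi : ℂ) := by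
    rw [Real.sqrt_eq_rpow, Complex.ofReal_cpow Real.pi_pos.le]
    norm_num
  have hmul : ((Real.pi : ℂ) * q⁻¹) ^ ((1:ℂ)/2) = (Real.pi : ℂ) ^ ((1:ℂ)/2) * q⁻¹ ^ ((1:ℂ)/2) := by
    have hp0 : (Real.pi : ℂ) ≠ 0 := by exact_mod_cast Real.pi_ne_zero
    rw [Complex.cpow_def_of_ne_zero (mul_ne_zero hp0 (inv_ne_zero hq0)),
      Complex.cpow_def_of_ne_zero hp0, Complex.cpow_def_of_ne_zero (inv_ne_zero hq0),
      Complex.log_ofReal_mul Real.pi_pos (inv_ne_zero hq0), ← Complex.exp_add,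
      Complex.ofReal_log Real.pi_pos.le]
    congr 1
    ring
  rw [div_eq_mul_inv (Real.pi : ℂ) q, hmul, Complex.inv_cpow _ _ harg, hpi]
  have h1 : q ^ ((1:ℂ)/2) ≠ 0 := by simp [hq0]
  have h2 : (Real.sqrt Real.pi : ℂ) ≠ 0 := by
    simpa using (Real.sqrt_pos.2 Real.pi_pos).ne'
  field_simp

lemma FrFT_kB (α : ℝ) (hα : Real.sin α ≠ 0) (a : ℂ) (x : ℝ) :
    cF α * ∫ t : ℝ, kF α x t * kB t a = kB x (Complex.exp (-(Complex.I * α)) * a) := by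
  have hre : (-(1 - Complex.I * Real.cot α) : ℂ).re < 0 := by simp [-Complex.ofReal_cot]
  have h := integral_cexp_quadratic hre (2 * a - 2 * Complex.I * x * (((Real.sin α)⁻¹ : ℝ) : ℂ))
    (Complex.I * (x:ℂ)^2 * Real.cot α - a^2/2)
  have h2 : ∀ t : ℝ, kF α x t * kB t a = Complex.exp (-(1 - Complex.I * Real.cot α) * (t:ℂ)^2 +
    (2 * a - 2 * Complex.I * x * (((Real.sin α)⁻¹ : ℝ) : ℂ)) * t +
    (Complex.I * (x:ℂ)^2 * Real.cot α - a^2/2)) := by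
    intro t
    unfold kF kB
    rw [← Complex.exp_add, ← Complex.exp_add]
    congr 1
    ring
  simp_rw [h2]
  rw [h, ← mul_assoc, neg_neg]
  have h3 := cpow_aux (1 - Complex.I * Real.cot α) (by simp [-Complex.ofReal_cot])
  unfold cF
  rw [h3, one_mul, kB]
  congr 1
  have he : Complex.exp (-(Complex.I * α)) = Complex.cos α - Complex.sin α * Complex.I := by
    rw [show -(Complex.I * (α:ℂ)) = (-α : ℂ) * Complex.I by ring, Complex.exp_mul_I]
    simp [sub_eq_add_neg]
  have hs : Complex.sin (α:ℂ) ≠ 0 := by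
    rw [← Complex.ofReal_sin]
    exact_mod_cast hα
  have hcot : ((Real.cot α : ℝ) : ℂ) = Complex.cos α / Complex.sin α := by
    rw [Real.cot_eq_cos_div_sin]
    push_cast
    rfl
  rw [he, hcot]
  push_cast
  set s := Complex.sin (α:ℂ)
  set c := Complex.cos (α:ℂ)
  have hsc : s^2 + c^2 = 1 := Complex.sin_sq_add_cos_sq _
  have hI := Complex.I_sq
  have hq : (1 - Complex.I * (c / s)) ≠ 0 := by
    intro h0
    have h0' : s - Complex.I * c = 0 := by
      field_simp at h0
      linear_combination h0
    have : (s - Complex.I * c) * (s + Complex.I * c) = 1 := by linear_combination hsc - c^2 * hI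
    rw [h0', zero_mul] at this
    exact zero_ne_one this
  have hinv : (1 - Complex.I * (c / s))⁻¹ = s * (s + Complex.I * c) := by
    rw [inv_eq_iff_eq_inv, eq_comm, inv_eq_iff_eq_inv, eq_comm]
    apply inv_eq_of_mul_eq_one_left
    field_simp
    linear_combination hsc - c^2 * hI
  have h5 : (2 * a - 2 * Complex.I * x * s⁻¹)^2 / (4 * -(1 - Complex.I * (c / s)))
      = - (a - Complex.I * x * s⁻¹)^2 * (s * (s + Complex.I * c)) := by
    rw [← hinv]
    field_simp
    ring
  rw [h5, div_eq_mul_inv c s]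
  have hr : s * s⁻¹ = 1 := mul_inv_cancel₀ hs
  have h6 : (a - Complex.I * x * s⁻¹)^2 * s = a^2 * s - 2 * Complex.I * a * x - (x:ℂ)^2 * s⁻¹ := by
    linear_combination (-2 * Complex.I * a * x + Complex.I^2 * x^2 * s⁻¹) * hr + x^2 * s⁻¹ * hI
  linear_combination (s + Complex.I * c) * h6 + (a^2/2) * hsc - x^2 * hr + (a^2 * s^2 / 2 - 2 * x * c * a) * hI

/-- Half-line Gaussian integral. -/
lemma half_gauss (c : ℂ) :
    ∫ y in Set.Ioi (0:ℝ), Complex.exp (-((y:ℂ) - c)^2) = (Real.sqrt Real.pi : ℂ) / 2 + erfInt c := by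
  have hb : ∀ (τ y : ℝ), τ ∈ Metric.ball (0:ℝ) 2 → ‖Complex.exp (-((y:ℂ) - τ * c)^2)‖ ≤
      Real.exp (4 * ‖c‖^2) * Real.exp (-(1/2) * y^2) := by
    intro τ y hτ
    rw [Complex.norm_exp, ← Real.exp_add, Real.exp_le_exp, ← Complex.normSq_eq_norm_sq,
      Complex.normSq_apply]
    have h4 : τ^2 ≤ 4 := by
      rw [Metric.mem_ball, dist_zero_right, Real.norm_eq_abs] at hτ
      nlinarith [abs_nonneg τ, sq_abs τ]
    simp [pow_two]
    nlinarith [sq_nonneg (y - 2 * (τ * c.re)), mul_nonneg (sub_nonneg.2 h4) (sq_nonneg c.re),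
      mul_nonneg (sub_nonneg.2 h4) (sq_nonneg c.im)]
  have hg := integrable_exp_neg_mul_sq (b := 1/2) (by norm_num)
  have hg1 := integrable_mul_exp_neg_mul_sq (b := 1/2) (by norm_num)
  have key : ∀ τ ∈ Metric.ball (0:ℝ) 2, HasDerivAt
      (fun τ : ℝ => ∫ y in Set.Ioi (0:ℝ), Complex.exp (-((y:ℂ) - τ * c)^2))
      (c * Complex.exp (-((τ:ℂ) * c)^2)) τ := by
    intro τ hτ
    have hd := hasDerivAt_integral_of_dominated_loc_of_deriv_le
      (μ := volume.restrict (Set.Ioi (0:ℝ)))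
      (F := fun (τ y : ℝ) => Complex.exp (-((y:ℂ) - τ * c)^2))
      (F' := fun (τ y : ℝ) => 2 * c * ((y:ℂ) - τ * c) * Complex.exp (-((y:ℂ) - τ * c)^2))
      (bound := fun y => 2 * ‖c‖ * (‖y‖ + 2 * ‖c‖) *
        (Real.exp (4 * ‖c‖^2) * Real.exp (-(1/2) * y^2)))
      (x₀ := τ) (s := Metric.ball (0:ℝ) 2) (Metric.isOpen_ball.mem_nhds hτ)
      (Filter.Eventually.of_forall fun τ => (by fun_prop : Continuous _).aestronglyMeasurable)
      (((hg.const_mul (Real.exp (4 * ‖c‖^2))).mono'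
        (by fun_prop : Continuous _).aestronglyMeasurable
        (Filter.Eventually.of_forall fun y => hb τ y hτ)).integrableOn)
      (by fun_prop : Continuous _).aestronglyMeasurable
      (Filter.Eventually.of_forall fun y τ' hτ' => by
        rw [norm_mul, norm_mul, norm_mul]
        gcongr
        · simp
        · refine (norm_sub_le _ _).trans ?_
          rw [norm_mul]
          rw [Metric.mem_ball, dist_zero_right] at hτ'
          simp only [Complex.norm_real]
          gcongr
        · exact hb τ' y hτ')
      (by
        refine Integrable.integrableOn ?_
        have := ((hg1.norm.const_mul (2 * ‖c‖ * Real.exp (4 * ‖c‖^2))).add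
          (hg.const_mul (2 * ‖c‖ * (2 * ‖c‖) * Real.exp (4 * ‖c‖^2))))
        refine this.congr (Filter.Eventually.of_forall fun y => ?_)
        simp only [Pi.add_apply, norm_mul, Real.norm_eq_abs, Real.abs_exp]
        ring)
      (Filter.Eventually.of_forall fun y τ' hτ' => by
        have h1 : HasDerivAt (fun τ : ℝ => -((y:ℂ) - τ * c)^2) (2 * c * ((y:ℂ) - τ' * c)) τ' := by
          have h0 : HasDerivAt (fun τ : ℝ => (τ : ℂ)) 1 τ' := Complex.ofRealCLM.hasDerivAt
          have := (((h0.mul_const c).const_sub (y:ℂ)).pow 2).neg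
          refine this.congr_deriv ?_
          push_cast
          ring
        refine h1.cexp.congr_deriv ?_
        ring)
    obtain ⟨hi, hd⟩ := hd
    refine hd.congr_deriv ?_
    have hD : ∀ y ∈ Set.Ici (0:ℝ), HasDerivAt (fun y : ℝ => -c * Complex.exp (-((y:ℂ) - τ * c)^2))
        (2 * c * ((y:ℂ) - τ * c) * Complex.exp (-((y:ℂ) - τ * c)^2)) y := by
      intro y _
      have h0 : HasDerivAt (fun τ : ℝ => (τ : ℂ)) 1 y := Complex.ofRealCLM.hasDerivAt
      have := ((((h0.sub_const (τ * c)).pow 2).neg).cexp).const_mul (-c)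
      refine this.congr_deriv ?_
      push_cast
      simp
      ring
    have ht : Filter.Tendsto (fun y : ℝ => -c * Complex.exp (-((y:ℂ) - τ * c)^2)) Filter.atTop
        (nhds 0) := by
      rw [show (0:ℂ) = -c * 0 by simp]
      refine Filter.Tendsto.const_mul _ ?_
      refine squeeze_zero_norm (fun y => hb τ y hτ) ?_
      rw [show (0:ℝ) = Real.exp (4 * ‖c‖^2) * 0 by simp]
      refine Filter.Tendsto.const_mul _ ?_
      refine Real.tendsto_exp_atBot.comp ?_
      exact Filter.Tendsto.const_mul_atTop_of_neg (by norm_num)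
        (Filter.tendsto_pow_atTop (by norm_num))
    rw [integral_Ioi_of_hasDerivAt_of_tendsto' hD hi ht]
    simp
  have hftc := intervalIntegral.integral_eq_sub_of_hasDerivAt (a := 0) (b := 1)
    (fun τ hτ => key τ (by
      rw [Set.uIcc_of_le zero_le_one] at hτ
      rw [Metric.mem_ball, dist_zero_right, Real.norm_eq_abs, abs_lt]
      constructor <;> linarith [hτ.1, hτ.2]))
    (by apply Continuous.intervalIntegrable; fun_prop)
  have h0 : ∫ y in Set.Ioi (0:ℝ), Complex.exp (-((y:ℂ))^2) = (Real.sqrt Real.pi : ℂ) / 2 := by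
    have := integral_gaussian_Ioi 1
    rw [div_one] at this
    have h := congrArg (fun r : ℝ => (r : ℂ)) this
    simp only [← integral_complex_ofReal] at h
    push_cast at h
    rw [← h]
    simp
  rw [erfInt, hftc]
  simp only [Complex.ofReal_one, one_mul, Complex.ofReal_zero, zero_mul, sub_zero]
  rw [h0]
  ring

lemma kB_mul (t : ℝ) (a b : ℂ) : kB t a * kB t b = Complex.exp (a * b) *
    Complex.exp (-(((Real.sqrt 2 * t : ℝ):ℂ) - (a + b) / (Real.sqrt 2 : ℂ))^2) := by
  have h2 : (Real.sqrt 2 : ℂ)^2 = 2 := by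
    rw [← Complex.ofReal_pow, Real.sq_sqrt (by norm_num)]
    norm_num
  have h0 : (Real.sqrt 2 : ℂ) ≠ 0 := by
    intro h
    rw [h] at h2
    norm_num at h2
  unfold kB
  rw [← Complex.exp_add, ← Complex.exp_add]
  congr 1
  have h3 : (((Real.sqrt 2 * t : ℝ):ℂ) - (a + b) / (Real.sqrt 2 : ℂ))^2 =
      2 * (t:ℂ)^2 - 2 * t * (a + b) + (a+b)^2/2 := by
    push_cast
    rw [sub_sq, mul_pow, div_pow, h2]
    field_simp
  rw [h3]
  ring

lemma erfInt_neg (z : ℂ) : erfInt (-z) = - erfInt z := by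
  unfold erfInt
  rw [← intervalIntegral.integral_neg]
  congr 1
  ext t
  simp

noncomputable def mH (φ x : ℝ) : ℂ := (Complex.exp (-(Complex.I * φ)) * ((heaviside x : ℝ) : ℂ)
      + Complex.exp (Complex.I * φ) * ((heaviside (-x) : ℝ) : ℂ))

lemma heaviside_meas : Measurable heaviside := by
  unfold heaviside
  exact Measurable.ite measurableSet_Ici measurable_const measurable_const

lemma mH_meas (φ : ℝ) : Measurable (mH φ) := by
  unfold mH
  have := heaviside_meas
  fun_prop

lemma heaviside_norm (x : ℝ) : ‖((heaviside x : ℝ) : ℂ)‖ ≤ 1 := by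
  unfold heaviside
  split_ifs <;> simp

lemma mH_norm (φ x : ℝ) : ‖mH φ x‖ ≤ 2 := by
  unfold mH
  refine (norm_add_le _ _).trans ?_
  rw [norm_mul, norm_mul]
  have h1 : ‖Complex.exp (-(Complex.I * φ))‖ = 1 := by simp [Complex.norm_exp]
  have h2 : ‖Complex.exp (Complex.I * φ)‖ = 1 := by simp [Complex.norm_exp]
  rw [h1, h2]
  linarith [heaviside_norm x, heaviside_norm (-x)]

lemma kB_cont' (a : ℂ) : Continuous (fun t : ℝ => kB t a) := by
  unfold kB
  fun_prop

lemma kB_integrable (a : ℂ) : Integrable (fun t : ℝ => kB t a) := by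
  refine ((integrable_exp_neg_mul_sq (b := 1/5) (by norm_num)).mul_const
    (Real.exp (3/4 * ‖a‖^2))).mono' (kB_cont' a).aestronglyMeasurable
    (Filter.Eventually.of_forall fun t => kB_bound t a)

lemma kB_norm_le (t : ℝ) (a : ℂ) : ‖kB t a‖ ≤ Real.exp (3/4 * ‖a‖^2) := by
  refine (kB_bound t a).trans ?_
  refine mul_le_of_le_one_left (Real.exp_pos _).le ?_
  rw [Real.exp_le_one_iff]
  nlinarith [sq_nonneg t]

lemma half_kB (a b : ℂ) : ∫ t in Set.Ioi (0:ℝ), kB t a * kB t b =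
    Complex.exp (a * b) * ((Real.sqrt 2 : ℂ)⁻¹ *
      ((Real.sqrt Real.pi : ℂ) / 2 + erfInt ((a + b) / (Real.sqrt 2 : ℂ)))) := by
  simp_rw [kB_mul]
  rw [integral_const_mul]
  congr 1
  have h := integral_comp_mul_left_Ioi
    (fun y : ℝ => Complex.exp (-((y:ℂ) - (a + b) / (Real.sqrt 2 : ℂ))^2)) 0
    (b := Real.sqrt 2) (by positivity)
  rw [h, mul_zero, half_gauss, Complex.real_smul]
  push_cast
  rfl

lemma kB_neg (t : ℝ) (a : ℂ) : kB (-t) a = kB t (-a) := by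
  unfold kB
  congr 1
  push_cast
  ring

lemma mH_kB (φ : ℝ) (a b : ℂ) : ∫ t : ℝ, mH φ t * (kB t a * kB t b) =
    Complex.exp (a * b) * ((Real.sqrt 2 : ℂ)⁻¹ * Aphi φ ((a + b) / (Real.sqrt 2 : ℂ))) := by
  have hInt : Integrable (fun t : ℝ => mH φ t * (kB t a * kB t b)) := by
    refine Integrable.bdd_mul (c := 2) ?_ (mH_meas φ).aestronglyMeasurable
      (Filter.Eventually.of_forall (mH_norm φ))
    exact Integrable.bdd_mul (kB_integrable b) (kB_cont' a).aestronglyMeasurable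
      (Filter.Eventually.of_forall fun t => kB_norm_le t a)
  rw [← intervalIntegral.integral_Iic_add_Ioi (b := 0) hInt.integrableOn hInt.integrableOn]
  have hp : ∫ t in Set.Ioi (0:ℝ), mH φ t * (kB t a * kB t b) =
      Complex.exp (-(Complex.I * φ)) * ∫ t in Set.Ioi (0:ℝ), kB t a * kB t b := by
    rw [← integral_const_mul]
    refine setIntegral_congr_fun measurableSet_Ioi fun t ht => ?_
    have ht' : 0 < t := ht
    simp [mH, heaviside, ht'.le, not_le.2 ht']
  have hn : ∫ t in Set.Iic (0:ℝ), mH φ t * (kB t a * kB t b) =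
      Complex.exp (Complex.I * φ) * ∫ t in Set.Ioi (0:ℝ), kB t (-a) * kB t (-b) := by
    have := integral_comp_neg_Ioi 0 (fun t : ℝ => mH φ t * (kB t a * kB t b))
    rw [neg_zero] at this
    rw [← this, ← integral_const_mul]
    refine setIntegral_congr_fun measurableSet_Ioi fun t ht => ?_
    have ht' : 0 < t := ht
    simp [mH, heaviside, ht'.le, not_le.2 ht', kB_neg]
  rw [hp, hn, half_kB, half_kB, neg_mul_neg, ← neg_add, neg_div, erfInt_neg, Aphi]
  rw [show -(Complex.I * (φ:ℂ)) = (-φ : ℂ) * Complex.I by ring,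
    show (Complex.I * (φ:ℂ)) = (φ : ℂ) * Complex.I by ring, Complex.exp_mul_I, Complex.exp_mul_I,
    Complex.cos_neg, Complex.sin_neg]
  push_cast
  ring

/-- The fractional Fourier transform of the inverse Bargmann transform. -/
lemma FrFT_BargmannInv (α : ℝ) (hα : Real.sin α ≠ 0) (p : Polynomial ℂ) (x : ℝ) :
    FrFT α (BargmannInv (fun w => p.eval w)) x =
      (((2 / Real.pi) ^ ((1:ℝ)/4) : ℝ) : ℂ) * ((Real.pi : ℂ)⁻¹ *
        ∫ w : ℂ, p.eval w * kB x (Complex.exp (-(Complex.I * α)) * starRingEnd ℂ w)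
          * Complex.exp (-(‖w‖ : ℂ)^2)) := by
  rw [FrFT_eq]
  have h1 : ∀ t : ℝ, kF α x t * BargmannInv (fun w => p.eval w) t =
      ((((2 / Real.pi) ^ ((1:ℝ)/4) : ℝ) : ℂ) * (Real.pi : ℂ)⁻¹) *
        ∫ w : ℂ, kF α x t * (p.eval w * kB t (1 * starRingEnd ℂ w)
          * Complex.exp (-(‖w‖ : ℂ)^2)) := by
    intro t
    rw [integral_const_mul]
    simp only [BargmannInv, gaussInt, kB, one_mul]
    ring
  simp_rw [h1]
  rw [integral_const_mul, integral_integral_swap]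
  swap
  · have hc : Continuous (fun q : ℝ × ℂ => kF α x q.1) := by
      unfold kF
      fun_prop
    exact master_integrable p (fun q => kF α x q.1) 1 hc.aestronglyMeasurable
      (fun q => (kF_norm α x q.1).le) 1 (by simp)
  have h2 : ∀ w : ℂ, cF α * ∫ t : ℝ, kF α x t * (p.eval w * kB t (1 * starRingEnd ℂ w)
          * Complex.exp (-(‖w‖ : ℂ)^2)) =
      p.eval w * kB x (Complex.exp (-(Complex.I * α)) * starRingEnd ℂ w)
          * Complex.exp (-(‖w‖ : ℂ)^2) := by
    intro w
    rw [← FrFT_kB α hα]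
    have : ∀ t : ℝ, kF α x t * (p.eval w * kB t (1 * starRingEnd ℂ w)
          * Complex.exp (-(‖w‖ : ℂ)^2)) = (p.eval w * Complex.exp (-(‖w‖ : ℂ)^2)) *
          (kF α x t * kB t (starRingEnd ℂ w)) := by
      intro t
      rw [one_mul]
      ring
    simp_rw [this]
    rw [integral_const_mul]
    ring
  simp_rw [← h2]
  rw [integral_const_mul]
  ring

/-- Moving the fractional Fourier transform to the Bargmann kernel. -/
lemma Bargmann_FrFT (α : ℝ) (hα : Real.sin α ≠ 0) (g : ℝ → ℂ) (hg : Integrable g) (z : ℂ) :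
    ∫ x : ℝ, FrFT α g x * kB x z =
      ∫ t : ℝ, g t * kB t (Complex.exp (-(Complex.I * α)) * z) := by
  have h1 : ∀ x : ℝ, FrFT α g x * kB x z = cF α * ∫ t : ℝ, kF α x t * (kB x z * g t) := by
    intro x
    rw [FrFT_eq, mul_assoc, ← integral_mul_const]
    congr 2
    ext t
    ring
  simp_rw [h1]
  rw [integral_const_mul, integral_integral_swap]
  swap
  · exact Integrable.bdd_mul (c := 1) ((kB_integrable z).mul_prod hg)
      (kF_cont α).aestronglyMeasurable
      (Filter.Eventually.of_forall fun q => (kF_norm α q.1 q.2).le)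
  rw [← integral_const_mul]
  congr 1
  ext t
  rw [← FrFT_kB α hα]
  have : ∀ x : ℝ, kF α x t * (kB x z * g t) = g t * (kF α t x * kB x z) := by
    intro x
    rw [kF_symm]
    ring
  simp_rw [this]
  rw [integral_const_mul]
  ring

/-- Under the Bargmann transform, the fractional Hilbert transform H^α_φ becomes the integral
operator f ↦ (1/√π) ∫ f(w) e^{zw̄} A_φ((e^{iα}z + e^{-iα}w̄)/√2) dλ(w). -/
theorem bargmann_frac_hilbert (α φ : ℝ) (hα : Real.sin α ≠ 0) (p : Polynomial ℂ) (f : ℂ → ℂ)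
    (hf : ∀ z, f z = p.eval z) (z : ℂ) :
    Bargmann (fracHilbert α φ (BargmannInv f)) z =
      ((Real.sqrt Real.pi : ℂ))⁻¹ * gaussInt (fun w =>
        f w * Complex.exp (z * starRingEnd ℂ w) *
          Aphi φ ((Complex.exp (Complex.I * α) * z
            + Complex.exp (-(Complex.I * α)) * starRingEnd ℂ w) / (Real.sqrt 2 : ℂ))) := by
  obtain rfl : f = fun w => p.eval w := funext hf
  set C : ℂ := (((2 / Real.pi) ^ ((1:ℝ)/4) : ℝ) : ℂ) with hC
  set u : ℂ := Complex.exp (-(Complex.I * α)) with hu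
  have hun : ‖u‖ = 1 := by simp [hu, Complex.norm_exp]
  set v : ℂ := Complex.exp (Complex.I * α) with hv
  have huv : v * u = 1 := by rw [hu, hv, ← Complex.exp_add]; simp
  have hCC : C * C = (Real.sqrt 2 : ℂ) * (Real.sqrt Real.pi : ℂ)⁻¹ := by
    rw [hC, ← Complex.ofReal_mul, ← Real.rpow_add (by positivity)]
    norm_num
    rw [← Complex.ofReal_inv, ← Complex.ofReal_mul]
    congr 1
    rw [← Real.sqrt_inv, ← Real.sqrt_mul (by norm_num), Real.sqrt_eq_rpow]
    norm_num [div_eq_mul_inv]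
  have hInt := master_integrable p (fun q => mH φ q.1) 2
    ((mH_meas φ).comp measurable_fst).aestronglyMeasurable (fun q => mH_norm φ q.1) u hun
  have hg0 : Integrable (fun t : ℝ => ∫ w : ℂ, mH φ t * (p.eval w * kB t (u * starRingEnd ℂ w)
      * Complex.exp (-(‖w‖ : ℂ)^2))) := hInt.integral_prod_left
  have hfun : (fun x : ℝ => (Complex.exp (-(Complex.I * φ)) * ((heaviside x : ℝ) : ℂ)
      + Complex.exp (Complex.I * φ) * ((heaviside (-x) : ℝ) : ℂ)) *
        FrFT α (BargmannInv (fun w => p.eval w)) x) =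
      fun t : ℝ => (C * (Real.pi : ℂ)⁻¹) * ∫ w : ℂ, mH φ t * (p.eval w * kB t (u * starRingEnd ℂ w)
      * Complex.exp (-(‖w‖ : ℂ)^2)) := by
    ext t
    rw [FrFT_BargmannInv α hα, integral_const_mul, mH]
    ring
  have hm := Bargmann_FrFT (-α) (by simpa using hα) _ (hg0.const_mul (C * (Real.pi : ℂ)⁻¹)) z
  have hv' : Complex.exp (-(Complex.I * ((-α : ℝ) : ℂ))) = v := by
    rw [hv]; congr 1; push_cast; ring
  rw [hv'] at hm
  unfold Bargmann fracHilbert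
  rw [hfun]
  change C * ∫ x : ℝ, FrFT (-α) _ x * kB x z = _
  rw [hm]
  have h3 : ∀ t : ℝ, (C * (Real.pi : ℂ)⁻¹ * ∫ w : ℂ, mH φ t * (p.eval w *
      kB t (u * starRingEnd ℂ w) * Complex.exp (-(‖w‖ : ℂ)^2))) * kB t (v * z) =
      C * (Real.pi : ℂ)⁻¹ * ∫ w : ℂ, (mH φ t * kB t (v * z)) * (p.eval w *
      kB t (u * starRingEnd ℂ w) * Complex.exp (-(‖w‖ : ℂ)^2)) := by
    intro t
    rw [integral_const_mul, integral_const_mul]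
    ring
  simp_rw [h3]
  rw [integral_const_mul, integral_integral_swap]
  swap
  · refine master_integrable p (fun q => mH φ q.1 * kB q.1 (v * z))
      (2 * Real.exp (3/4 * ‖v * z‖^2)) ?_ (fun q => ?_) u hun
    · exact (((mH_meas φ).mul (kB_cont' (v*z)).measurable).comp measurable_fst).aestronglyMeasurable
    · rw [norm_mul]
      gcongr
      · exact mH_norm _ _
      · exact kB_norm_le _ _
  have h4 : ∀ w : ℂ, ∫ t : ℝ, (mH φ t * kB t (v * z)) * (p.eval w *
      kB t (u * starRingEnd ℂ w) * Complex.exp (-(‖w‖ : ℂ)^2)) =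
      (Real.sqrt 2 : ℂ)⁻¹ * (p.eval w * Complex.exp (z * starRingEnd ℂ w) *
        Aphi φ ((v * z + u * starRingEnd ℂ w) / (Real.sqrt 2 : ℂ))
        * Complex.exp (-(‖w‖ : ℂ)^2)) := by
    intro w
    have : ∀ t : ℝ, (mH φ t * kB t (v * z)) * (p.eval w *
      kB t (u * starRingEnd ℂ w) * Complex.exp (-(‖w‖ : ℂ)^2)) =
      (p.eval w * Complex.exp (-(‖w‖ : ℂ)^2)) * (mH φ t * (kB t (v * z) *
        kB t (u * starRingEnd ℂ w))) := by
      intro t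
      ring
    simp_rw [this]
    rw [integral_const_mul, mH_kB, show v * z * (u * starRingEnd ℂ w) = z * starRingEnd ℂ w by
      linear_combination z * starRingEnd ℂ w * huv]
    ring
  simp_rw [h4]
  rw [integral_const_mul, gaussInt]
  have h20 : (Real.sqrt 2 : ℂ) * (Real.sqrt 2 : ℂ)⁻¹ = 1 := by
    apply mul_inv_cancel₀
    simp
  set J := ∫ w : ℂ, p.eval w * Complex.exp (z * starRingEnd ℂ w) *
        Aphi φ ((v * z + u * starRingEnd ℂ w) / (Real.sqrt 2 : ℂ))
        * Complex.exp (-(‖w‖ : ℂ)^2)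
  linear_combination (Real.pi : ℂ)⁻¹ * (Real.sqrt 2 : ℂ)⁻¹ * J * hCC +
    (Real.pi : ℂ)⁻¹ * (Real.sqrt Real.pi : ℂ)⁻¹ * J * h20
end

section
/- For every integer n ≥ 0 and every z ∈ ℂ, the Bargmann transform of the n-th Hermite function is the normalized monomial: (2/π)^{1/4} ∫_ℝ h_n(x) e^{2xz - x² - z²/2} dx = zⁿ/√(n!). -/
open MeasureTheory Complex

lemma gaussDeriv_poly (n : ℕ) : ∃ P : Polynomial ℝ,
    deriv^[n] (fun y : ℝ => Real.exp (-y^2)) = fun y => P.eval y * Real.exp (-y^2) := by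
  induction n with
  | zero => exact ⟨1, by simp⟩
  | succ n ih =>
    obtain ⟨P, hP⟩ := ih
    refine ⟨P.derivative - 2 * Polynomial.X * P, ?_⟩
    rw [Function.iterate_succ_apply', hP]
    funext y
    have h1 : HasDerivAt (fun y : ℝ => Real.exp (-y^2)) (Real.exp (-y^2) * (-(2*y))) y := by
      have := ((hasDerivAt_pow 2 y).neg).exp
      simpa using this
    have h2 : HasDerivAt (fun y : ℝ => P.eval y * Real.exp (-y^2)) _ y := (P.hasDerivAt y).mul h1
    rw [h2.deriv]
    simp
    ring

lemma gaussDeriv_diff (n : ℕ) (y : ℝ) :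
    HasDerivAt (deriv^[n] (fun y : ℝ => Real.exp (-y^2)))
      (deriv^[n+1] (fun y : ℝ => Real.exp (-y^2)) y) y := by
  rw [Function.iterate_succ_apply']
  apply DifferentiableAt.hasDerivAt
  obtain ⟨P, hP⟩ := gaussDeriv_poly n
  rw [hP]
  exact P.differentiableAt.mul (by fun_prop)

lemma integrable_pow_gauss (k : ℕ) (c : ℂ) :
    Integrable (fun y : ℝ => (y:ℂ)^k * cexp (-(y:ℂ)^2 + c * y)) := by
  have hi : ∀ c : ℂ, Integrable (fun y : ℝ => cexp (-(y:ℂ)^2 + c * y)) := fun c => by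
    have := integrable_cexp_quadratic' (b := -1) (by simp) c 0
    simpa using this
  refine Integrable.mono' (((hi (c+1)).norm.add (hi (c-1)).norm).const_mul (k.factorial : ℝ))
    (by fun_prop) (Filter.Eventually.of_forall fun y => ?_)
  have h1 : |y|^k ≤ k.factorial * Real.exp |y| := by
    have := Real.pow_div_factorial_le_exp (|y|) (abs_nonneg y) k
    rw [div_le_iff₀ (by positivity)] at this
    linarith
  have h2 : Real.exp |y| ≤ Real.exp y + Real.exp (-y) := by
    rcases abs_cases y with h | h <;> rw [h.1] <;> linarith [Real.exp_pos y, Real.exp_pos (-y)]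
  have e1 : cexp (-(y:ℂ)^2 + (c+1) * y) = cexp (-(y:ℂ)^2 + c * y) * cexp ((y:ℝ):ℂ) := by
    rw [← Complex.exp_add]; ring_nf
  have e2 : cexp (-(y:ℂ)^2 + (c-1) * y) = cexp (-(y:ℂ)^2 + c * y) * cexp ((-y:ℝ):ℂ) := by
    rw [← Complex.exp_add]; push_cast; ring_nf
  simp only [Pi.add_apply]
  rw [e1, e2, norm_mul, norm_mul, norm_mul, norm_pow, Complex.norm_real, Real.norm_eq_abs,
    Complex.norm_exp_ofReal, Complex.norm_exp_ofReal]
  have hN := norm_nonneg (cexp (-(y:ℂ)^2 + c * y))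
  have h3 : |y|^k ≤ k.factorial * (Real.exp y + Real.exp (-y)) :=
    h1.trans (mul_le_mul_of_nonneg_left h2 (by positivity))
  calc _ ≤ k.factorial * (Real.exp y + Real.exp (-y)) * ‖cexp (-(y:ℂ)^2 + c * y)‖ :=
        mul_le_mul_of_nonneg_right h3 hN
    _ = _ := by ring

lemma integrable_gaussDeriv (n : ℕ) (c : ℂ) :
    Integrable (fun y : ℝ =>
      ((deriv^[n] (fun y : ℝ => Real.exp (-y^2)) y : ℝ) : ℂ) * cexp (c * y)) := by
  obtain ⟨P, hP⟩ := gaussDeriv_poly n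
  have : (fun y : ℝ => ((deriv^[n] (fun y : ℝ => Real.exp (-y^2)) y : ℝ) : ℂ) * cexp (c * y))
      = fun y : ℝ => ∑ k ∈ Finset.range (P.natDegree + 1),
        ((P.coeff k : ℝ) : ℂ) * ((y:ℂ)^k * cexp (-(y:ℂ)^2 + c * y)) := by
    funext y
    rw [hP]
    simp only [Polynomial.eval_eq_sum_range]
    push_cast
    rw [Finset.sum_mul, Finset.sum_mul]
    refine Finset.sum_congr rfl fun k _ => ?_
    rw [Complex.exp_add]; ring
  rw [this]
  exact integrable_finsetSum _ fun k _ => (integrable_pow_gauss k c).const_mul _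

lemma integral_gaussDeriv (n : ℕ) (c : ℂ) :
    ∫ y : ℝ, ((deriv^[n] (fun y : ℝ => Real.exp (-y^2)) y : ℝ) : ℂ) * cexp (c * y)
      = (-c)^n * ((Real.sqrt Real.pi : ℝ) * cexp (c^2/4)) := by
  induction n with
  | zero =>
    have := integral_cexp_quadratic (b := -1) (by simp) c 0
    simp only [Function.iterate_zero, id, pow_zero, one_mul]
    have e : ∀ y : ℝ, ((Real.exp (-y^2) : ℝ) : ℂ) * cexp (c * y)
        = cexp (-1 * (y:ℂ)^2 + c * y + 0) := fun y => by
      push_cast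
      rw [← Complex.exp_add]; ring_nf
    simp_rw [e]
    rw [this, Real.sqrt_eq_rpow, Complex.ofReal_cpow Real.pi_pos.le]
    norm_num
    ring_nf
  | succ n ih =>
    have hd : ∀ y : ℝ, HasDerivAt
        (fun y : ℝ => ((deriv^[n] (fun y : ℝ => Real.exp (-y^2)) y : ℝ) : ℂ) * cexp (c * y))
        (((deriv^[n+1] (fun y : ℝ => Real.exp (-y^2)) y : ℝ) : ℂ) * cexp (c * y)
          + c * (((deriv^[n] (fun y : ℝ => Real.exp (-y^2)) y : ℝ) : ℂ) * cexp (c * y))) y := by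
      intro y
      have h1 := (gaussDeriv_diff n y).ofReal_comp
      have h2 : HasDerivAt (fun y : ℝ => cexp (c * y)) (cexp (c * y) * (c * 1)) y :=
        ((Complex.ofRealCLM.hasDerivAt (x := y)).const_mul c).cexp
      have h3 := h1.mul h2
      refine HasDerivAt.congr_deriv (f := fun y : ℝ => ((deriv^[n] (fun y : ℝ => Real.exp (-y^2)) y : ℝ) : ℂ) * cexp (c * y)) h3 ?_
      ring
    have i1 := integrable_gaussDeriv (n+1) c
    have i0 := integrable_gaussDeriv n c
    have := integral_eq_zero_of_hasDerivAt_of_integrable hd (i1.add (i0.const_mul c)) i0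
    rw [integral_add i1 (i0.const_mul c), integral_const_mul, ih] at this
    rw [eq_neg_of_add_eq_zero_left this]
    ring

/-- The Bargmann transform sends the n-th Hermite function to zⁿ/√(n!). -/
theorem bargmann_hermite (n : ℕ) (z : ℂ) :
    Bargmann (fun x => ((hermiteFun n x : ℝ) : ℂ)) z =
      z ^ n / ((Real.sqrt n.factorial : ℝ) : ℂ) := by
  set s : ℝ := Real.sqrt 2 with hs
  have hs2 : s^2 = 2 := Real.sq_sqrt (by norm_num)
  have hs2c : (s:ℂ)^2 = 2 := by exact_mod_cast hs2
  have hs0 : 0 < s := by positivity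
  have hs0c : (s:ℂ) ≠ 0 := by exact_mod_cast hs0.ne'
  set a : ℝ := (2 / Real.pi) ^ ((1:ℝ)/4) with ha
  have ha2 : a * a = s / Real.sqrt Real.pi := by
    rw [ha, ← Real.rpow_add (by positivity), hs, ← Real.sqrt_div (by norm_num), Real.sqrt_eq_rpow]
    norm_num
  have ha2c : (a:ℂ) * a = s / (Real.sqrt Real.pi : ℝ) := by exact_mod_cast ha2
  have hq : Real.sqrt (2^n * n.factorial) = s^n * Real.sqrt n.factorial := by
    rw [Real.sqrt_mul (by positivity)]
    congr 1
    rw [← hs2, ← pow_mul, mul_comm, pow_mul, Real.sqrt_sq (by positivity)]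
  have hf : (((Real.sqrt n.factorial : ℝ)) : ℂ) ≠ 0 := by
    have : 0 < Real.sqrt n.factorial := Real.sqrt_pos.2 (by positivity)
    exact_mod_cast this.ne'
  have hp : (((Real.sqrt Real.pi : ℝ)) : ℂ) ≠ 0 := by
    have : 0 < Real.sqrt Real.pi := Real.sqrt_pos.2 Real.pi_pos
    exact_mod_cast this.ne'
  set G : ℝ → ℝ := deriv^[n] (fun y : ℝ => Real.exp (-y^2)) with hG
  have key : ∀ x : ℝ, ((hermiteFun n x : ℝ) : ℂ) * cexp (2*x*z - (x:ℂ)^2 - z^2/2)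
      = ((a:ℂ) * ((s:ℂ)^n * (Real.sqrt n.factorial : ℝ))⁻¹ * (-1)^n * cexp (-(z^2/2))) *
        (fun y : ℝ => ((G y : ℝ) : ℂ) * cexp ((s * z) * y)) (s * x) := by
    intro x
    have e : cexp (-(x:ℂ)^2) * cexp (((s:ℂ) * x)^2) * cexp (2*x*z - (x:ℂ)^2 - z^2/2)
        = cexp (-(z^2/2)) * cexp ((s * z) * (s * x)) := by
      rw [← Complex.exp_add, ← Complex.exp_add, ← Complex.exp_add]
      congr 1
      linear_combination ((x:ℂ)^2 - x * z) * hs2c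
    unfold hermiteFun physHermite
    rw [hq, ← hs, ← ha, ← hG]
    push_cast
    linear_combination ((a:ℂ) * ((s:ℂ)^n * (Real.sqrt n.factorial : ℝ))⁻¹ * (-1)^n * G (s*x)) * e
  unfold Bargmann
  simp_rw [key]
  rw [integral_const_mul,
    Measure.integral_comp_mul_left (fun y : ℝ => ((G y : ℝ) : ℂ) * cexp ((s * z) * y)), hG, integral_gaussDeriv, ← ha,
    abs_of_pos (inv_pos.2 hs0), Complex.real_smul]
  have e : cexp (-(z^2/2)) * cexp ((s*z)^2/4) = 1 := by
    rw [← Complex.exp_add, mul_pow, hs2c]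
    ring_nf
    simp
  have hm : ((-1:ℂ))^n * (-(s*z))^n = s^n * z^n := by
    rw [← mul_pow, ← mul_pow]; ring_nf
  push_cast
  calc _ = ((a:ℂ) * a) * ((s:ℂ)^n * (Real.sqrt n.factorial : ℝ))⁻¹ * ((-1)^n * (-(s*z))^n)
        * (s:ℂ)⁻¹ * (Real.sqrt Real.pi : ℝ) * (cexp (-(z^2/2)) * cexp ((s*z)^2/4)) := by ring
    _ = _ := by
      rw [e, hm, ha2c]
      field_simp
end

section
/- Let α ∈ ℝ with sin α ≠ 0 and let f : ℂ → ℂ be a polynomial function. Then for every x ∈ ℝ, F_α(B⁻¹f)(x) = (2/π)^{1/4} e^{-x²} ∫_ℂ f(w) e^{-e^{-2iα} w̄²/2 + 2 e^{-iα} x w̄} dλ(w). -/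
open MeasureTheory Complex

lemma aux_prefactor (β : ℂ) (hβ : 0 < β.re) :
    (β ^ ((1:ℂ)/2) / (Real.sqrt Real.pi : ℂ)) * ((Real.pi : ℂ) / β) ^ ((1:ℂ)/2) = 1 := by
  have hβ0 : β ≠ 0 := by rintro rfl; simp at hβ
  have harg : β.arg ≠ Real.pi := by
    intro h
    rw [Complex.arg_eq_pi_iff] at h
    linarith [h.1]
  have hpi : (Real.pi : ℂ) ≠ 0 := by exact_mod_cast Real.pi_ne_zero
  have hs : (Real.sqrt Real.pi : ℂ) = (Real.pi : ℂ) ^ ((1:ℂ)/2) := by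
    rw [Real.sqrt_eq_rpow, Complex.ofReal_cpow Real.pi_pos.le]
    norm_num
  have hs0 : (Real.sqrt Real.pi : ℂ) ≠ 0 := by
    exact_mod_cast (Real.sqrt_pos.mpr Real.pi_pos).ne'
  have h2 : ((Real.pi : ℂ) / β) ^ ((1:ℂ)/2) = (Real.sqrt Real.pi : ℂ) * (β ^ ((1:ℂ)/2))⁻¹ := by
    rw [hs, ← Complex.inv_cpow _ _ harg, div_eq_mul_inv,
      Complex.cpow_def_of_ne_zero (mul_ne_zero hpi (inv_ne_zero hβ0)),
      Complex.cpow_def_of_ne_zero hpi, Complex.cpow_def_of_ne_zero (inv_ne_zero hβ0),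
      Complex.log_ofReal_mul Real.pi_pos (inv_ne_zero hβ0), ← Complex.exp_add,
      Complex.ofReal_log Real.pi_pos.le]
    ring_nf
  have h3 : β ^ ((1:ℂ)/2) ≠ 0 := by
    rw [Complex.cpow_def_of_ne_zero hβ0]; exact Complex.exp_ne_zero _
  rw [h2]
  field_simp

lemma aux_gauss_int (b : ℝ) (hb : 0 < b) :
    Integrable (fun w : ℂ => Real.exp (-b * ‖w‖ ^ 2)) := by
  have h := (GaussianFourier.integrable_cexp_neg_mul_sq_norm_add (V := ℂ) (b := (b : ℂ))
    (by simpa using hb) 0 0).norm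
  refine h.congr (Filter.Eventually.of_forall fun w => ?_)
  simp only [Complex.norm_exp]
  congr 1
  rw [show (-(b:ℂ) * (‖w‖:ℂ)^2 + 0 * ((inner ℝ (0:ℂ) w : ℝ) : ℂ)) = ((-b * ‖w‖^2 : ℝ) : ℂ) by
    push_cast; ring]
  exact Complex.ofReal_re _

lemma aux_poly_int (p : Polynomial ℂ) :
    Integrable (fun w : ℂ => ‖p.eval w‖ * Real.exp (-(1/4) * ‖w‖ ^ 2)) := by
  have hmono : ∀ n : ℕ, Integrable (fun w : ℂ => w ^ n * (Real.exp (-(1/4) * ‖w‖ ^ 2) : ℂ)) := by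
    intro n
    have hg := (aux_gauss_int (1/8) (by norm_num)).const_mul (1 + 8 ^ n * (n.factorial : ℝ))
    refine hg.mono' (by fun_prop) (Filter.Eventually.of_forall fun w => ?_)
    have hr : 0 ≤ ‖w‖ := norm_nonneg w
    rw [norm_mul, norm_pow, Complex.norm_real, Real.norm_of_nonneg (Real.exp_pos _).le]
    generalize ‖w‖ = r at hr ⊢
    have h1 := Real.pow_div_factorial_le_exp (x := r ^ 2 / 8) (by positivity) n
    have h2 : (1:ℝ) ≤ Real.exp (r ^ 2 / 8) := Real.one_le_exp (by positivity)
    have hfac : (0:ℝ) < n.factorial := by exact_mod_cast n.factorial_pos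
    rw [div_le_iff₀ hfac, div_pow, div_le_iff₀ (by positivity)] at h1
    have h3 : r ^ n ≤ 1 + (r ^ 2) ^ n := by
      rw [← pow_mul, mul_comm, pow_mul]
      nlinarith [sq_nonneg (r ^ n - 1)]
    have h4 : r ^ n ≤ (1 + 8 ^ n * (n.factorial : ℝ)) * Real.exp (r ^ 2 / 8) := by
      calc r ^ n ≤ 1 + (r ^ 2) ^ n := h3
        _ ≤ Real.exp (r ^ 2 / 8) + Real.exp (r ^ 2 / 8) * n.factorial * 8 ^ n := add_le_add h2 h1
        _ = _ := by ring
    calc r ^ n * Real.exp (-(1/4) * r ^ 2)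
        ≤ (1 + 8 ^ n * (n.factorial : ℝ)) * Real.exp (r ^ 2 / 8) * Real.exp (-(1/4) * r ^ 2) :=
          mul_le_mul_of_nonneg_right h4 (Real.exp_pos _).le
      _ = _ := by
          rw [mul_assoc, ← Real.exp_add]
          congr 2
          ring
  have hp : Integrable (fun w : ℂ => p.eval w * (Real.exp (-(1/4) * ‖w‖ ^ 2) : ℂ)) := by
    simp_rw [Polynomial.eval_eq_sum_range, Finset.sum_mul, mul_assoc]
    exact integrable_finsetSum _ fun n _ => (hmono n).const_mul _
  refine hp.norm.congr (Filter.Eventually.of_forall fun w => ?_)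
  simp only [norm_mul, Complex.norm_real, Real.norm_of_nonneg (Real.exp_pos _).le]

lemma aux_kernel (α : ℝ) (hα : Real.sin α ≠ 0) (x : ℝ) (w : ℂ) :
    ((1 - Complex.I * Real.cot α) ^ ((1:ℂ)/2) / (Real.sqrt Real.pi : ℂ)) *
    Complex.exp (Complex.I * (x:ℂ)^2 * Real.cot α) *
    ∫ t : ℝ, Complex.exp (-2 * Complex.I * ((x:ℂ) * t * (((Real.sin α)⁻¹ : ℝ) : ℂ)
      - ((Real.cot α : ℂ) / 2) * (t:ℂ)^2)) * Complex.exp (2*t*w - (t:ℂ)^2 - w^2/2)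
    = Complex.exp (-(x:ℂ)^2) * Complex.exp (-Complex.exp (-(2 * Complex.I * α)) * w^2 / 2
            + 2 * Complex.exp (-(Complex.I * α)) * (x : ℂ) * w) := by
  have hre : 0 < (1 - Complex.I * Real.cot α).re := by
    simp [-Complex.ofReal_cot]
  have hβ0 : (1 - Complex.I * Real.cot α) ≠ 0 := by
    intro h; rw [h] at hre; simp at hre
  have hint := integral_cexp_quadratic (b := -(1 - Complex.I * Real.cot α)) (by simp [-Complex.ofReal_cot])
    (2 * (w - Complex.I * x * (((Real.sin α)⁻¹ : ℝ) : ℂ))) (-w^2/2)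
  have hI : (∫ t : ℝ, Complex.exp (-2 * Complex.I * ((x:ℂ) * t * (((Real.sin α)⁻¹ : ℝ) : ℂ)
      - ((Real.cot α : ℂ) / 2) * (t:ℂ)^2)) * Complex.exp (2*t*w - (t:ℂ)^2 - w^2/2)) =
      ∫ t : ℝ, Complex.exp (-(1 - Complex.I * Real.cot α) * (t:ℂ)^2 +
        2 * (w - Complex.I * x * (((Real.sin α)⁻¹ : ℝ) : ℂ)) * t + -w^2/2) := by
    congr 1
    funext t
    rw [← Complex.exp_add]
    congr 1
    ring
  rw [hI, hint, neg_neg]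
  have hpre := aux_prefactor _ hre
  calc _ = (((1 - Complex.I * Real.cot α) ^ ((1:ℂ)/2) / (Real.sqrt Real.pi : ℂ)) *
        ((Real.pi : ℂ) / (1 - Complex.I * Real.cot α)) ^ ((1:ℂ)/2)) *
        (Complex.exp (Complex.I * (x:ℂ)^2 * Real.cot α) *
        Complex.exp (-w^2/2 - (2 * (w - Complex.I * x * (((Real.sin α)⁻¹ : ℝ) : ℂ)))^2 /
          (4 * -(1 - Complex.I * Real.cot α)))) := by ring
    _ = _ := by
      rw [hpre, one_mul, ← Complex.exp_add, ← Complex.exp_add]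
      congr 1
      have hs : Complex.sin α ≠ 0 := by
        rw [← Complex.ofReal_sin]; exact_mod_cast hα
      have hcot : (Real.cot α : ℂ) = Complex.cos α / Complex.sin α := by
        rw [Real.cot_eq_cos_div_sin]; push_cast; rfl
      have he : Complex.exp (-(Complex.I * α)) = Complex.cos α - Complex.sin α * Complex.I := by
        rw [show -(Complex.I * α) = (-(α:ℂ)) * Complex.I by ring, Complex.exp_mul_I]
        simp [sub_eq_add_neg]
      have he2 : Complex.exp (-(2 * Complex.I * α)) =
          (Complex.cos α - Complex.sin α * Complex.I)^2 := by
        rw [← he, ← Complex.exp_nat_mul]; congr 1; push_cast; ring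
      have hI2 := Complex.I_sq
      have hsc := Complex.sin_sq_add_cos_sq (α : ℂ)
      have hinv : (1 - Complex.I * (Real.cot α : ℂ))⁻¹ =
          Complex.I * Complex.sin α * (Complex.cos α - Complex.sin α * Complex.I) := by
        apply inv_eq_of_mul_eq_one_right
        rw [hcot]
        field_simp
        linear_combination hsc - Complex.cos α ^ 2 * hI2 +
          (Complex.I * Complex.sin α * Complex.cos α - Complex.sin α ^ 2) * hI2
      have hdiv : (2 * (w - Complex.I * x * (((Real.sin α)⁻¹ : ℝ) : ℂ)))^2 /
          (4 * -(1 - Complex.I * Real.cot α)) =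
          -(w - Complex.I * x * (((Real.sin α)⁻¹ : ℝ) : ℂ))^2 *
            (1 - Complex.I * (Real.cot α : ℂ))⁻¹ := by
        field_simp
        ring
      rw [hdiv, hinv, he, he2, hcot]
      push_cast
      have hu : Complex.sin α * (Complex.sin α)⁻¹ = 1 := mul_inv_cancel₀ hs
      rw [div_eq_mul_inv (Complex.cos (α : ℂ))]
      generalize (Complex.sin (α : ℂ))⁻¹ = u at hu ⊢
      generalize Complex.sin (α : ℂ) = s at hu hsc ⊢
      generalize Complex.cos (α : ℂ) = c at hsc ⊢
      linear_combination w^2 * (1/2 * hsc - s^2/2 * hI2)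
        - 2 * (c - s * Complex.I) * x * w * (Complex.I^2 * hu + hI2)
        + (x:ℂ)^2 * ((Complex.I^3 * u * (c - s * Complex.I) - Complex.I^4) * hu
          + (Complex.I * c * u + (1 - Complex.I^2)) * hI2)

/-- F_α(B⁻¹f)(x) = (2/π)^{1/4} e^{-x²} ∫ f(w) e^{-e^{-2iα}w̄²/2 + 2e^{-iα}xw̄} dλ(w)
for polynomial f. -/
theorem frft_bargmann_inv (α : ℝ) (hα : Real.sin α ≠ 0) (p : Polynomial ℂ) (f : ℂ → ℂ)
    (hf : ∀ z, f z = p.eval z) (x : ℝ) :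
    FrFT α (BargmannInv f) x =
      (((2 / Real.pi) ^ ((1:ℝ)/4) : ℝ) : ℂ) * Complex.exp (-(x:ℂ)^2) *
        gaussInt (fun w => f w *
          Complex.exp (-Complex.exp (-(2 * Complex.I * α)) * (starRingEnd ℂ w)^2 / 2
            + 2 * Complex.exp (-(Complex.I * α)) * (x : ℂ) * starRingEnd ℂ w)) := by
  have hF : ∀ z, f z = p.eval z := hf
  set A : ℂ := ((1 - Complex.I * Real.cot α) ^ ((1:ℂ)/2) / (Real.sqrt Real.pi : ℂ)) *
    Complex.exp (Complex.I * (x:ℂ)^2 * Real.cot α) with hA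
  set C : ℂ := (((2 / Real.pi) ^ ((1:ℝ)/4) : ℝ) : ℂ) with hC
  set E : ℝ → ℂ := fun t => Complex.exp (-2 * Complex.I * ((x:ℂ) * t *
    (((Real.sin α)⁻¹ : ℝ) : ℂ) - ((Real.cot α : ℂ) / 2) * (t:ℂ)^2)) with hE
  set K : ℝ → ℂ → ℂ := fun t w => E t * (p.eval w * Complex.exp (2*t*(starRingEnd ℂ w) - (t:ℂ)^2
    - (starRingEnd ℂ w)^2/2) * Complex.exp (-(‖w‖ : ℂ)^2)) with hK
  have hnE : ∀ t, ‖E t‖ = 1 := by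
    intro t
    rw [hE]
    simp only
    rw [show -2 * Complex.I * ((x:ℂ) * t * (((Real.sin α)⁻¹ : ℝ) : ℂ)
      - ((Real.cot α : ℂ) / 2) * (t:ℂ)^2) = ((-2 * (x * t * (Real.sin α)⁻¹
        - (Real.cot α / 2) * t^2) : ℝ) : ℂ) * Complex.I by push_cast; ring]
    exact Complex.norm_exp_ofReal_mul_I _
  have hKint : Integrable (Function.uncurry K) (volume.prod volume) := by
    have hdom := (integrable_exp_neg_mul_sq (b := 1/5) (by norm_num)).mul_prod (aux_poly_int p)
    refine hdom.mono' ?_ (Filter.Eventually.of_forall ?_)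
    · apply Continuous.aestronglyMeasurable
      simp only [hK, hE, Function.uncurry_def]
      have := p.continuous
      fun_prop
    · rintro ⟨t, w⟩
      simp only [Function.uncurry, hK]
      rw [norm_mul, hnE, one_mul, norm_mul, norm_mul, Complex.norm_exp, Complex.norm_exp,
        mul_assoc, ← Real.exp_add, mul_left_comm, ← Real.exp_add]
      refine mul_le_mul_of_nonneg_left (Real.exp_le_exp.mpr ?_) (norm_nonneg _)
      have hw : ‖w‖ ^ 2 = w.re ^ 2 + w.im ^ 2 := by
        rw [Complex.sq_norm, Complex.normSq_apply]; ring
      have h1 : (-(‖w‖ : ℂ)^2).re = -(w.re ^ 2 + w.im ^ 2) := by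
        rw [← hw, ← Complex.ofReal_pow, ← Complex.ofReal_neg, Complex.ofReal_re]
      have h2 : (2*t*(starRingEnd ℂ w) - (t:ℂ)^2 - (starRingEnd ℂ w)^2/2).re =
          2 * t * w.re - t^2 - (w.re^2 - w.im^2)/2 := by
        simp [pow_two]
      rw [h1, h2, hw]
      nlinarith [sq_nonneg (4 * t - 5 * w.re), sq_nonneg w.im]
  have hL : FrFT α (BargmannInv f) x = A * ∫ t : ℝ, C * (Real.pi : ℂ)⁻¹ * ∫ w : ℂ, K t w := by
    unfold FrFT BargmannInv gaussInt
    rw [hA]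
    congr 1
    congr 1
    funext t
    simp only [hK, hE, hF]
    rw [integral_const_mul]
    ring
  rw [hL, integral_const_mul, integral_integral_swap hKint]
  unfold gaussInt
  have hstep : ∀ w : ℂ, A * (∫ t : ℝ, K t w) = Complex.exp (-(x:ℂ)^2) * (f w *
          Complex.exp (-Complex.exp (-(2 * Complex.I * α)) * (starRingEnd ℂ w)^2 / 2
            + 2 * Complex.exp (-(Complex.I * α)) * (x : ℂ) * starRingEnd ℂ w) *
            Complex.exp (-(‖w‖ : ℂ)^2)) := by
    intro w
    have hk := aux_kernel α hα x (starRingEnd ℂ w)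
    have : (∫ t : ℝ, K t w) = p.eval w * Complex.exp (-(‖w‖ : ℂ)^2) *
        ∫ t : ℝ, E t * Complex.exp (2*t*(starRingEnd ℂ w) - (t:ℂ)^2 - (starRingEnd ℂ w)^2/2) := by
      rw [← integral_const_mul]
      congr 1
      funext t
      simp only [hK]
      ring
    rw [this, hF]
    linear_combination (p.eval w * Complex.exp (-(‖w‖ : ℂ)^2)) * hk
  have hfin : A * (∫ w : ℂ, ∫ t : ℝ, K t w) = Complex.exp (-(x:ℂ)^2) * ∫ w : ℂ, (f w *
          Complex.exp (-Complex.exp (-(2 * Complex.I * α)) * (starRingEnd ℂ w)^2 / 2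
            + 2 * Complex.exp (-(Complex.I * α)) * (x : ℂ) * starRingEnd ℂ w) *
            Complex.exp (-(‖w‖ : ℂ)^2)) := by
    rw [← integral_const_mul, ← integral_const_mul]
    simp_rw [hstep]
  linear_combination (C * (Real.pi : ℂ)⁻¹) * hfin
end

section
/- Let α ∈ ℝ, let φ be an entire function with ∫_ℂ |φ(z)|² dλ(z) < ∞, and let f : ℂ → ℂ be a polynomial function. Define S^α_φ f(z) = ∫_ℂ f(w) e^{z w̄} φ(e^{iα} z - e^{-iα} w̄) dλ(w) and U_α f(z) = f(e^{-iα} z). Then for every z ∈ ℂ, S^α_φ f(z) = S_φ(U_α f)(e^{iα} z); that is, S^α_φ = U_{-α} S_φ U_α, so S^α_φ and S_φ are unitarily equivalent. -/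
open MeasureTheory Complex

/-- The singular integral operator S_φ f(z) = ∫_ℂ f(w) e^{zw̄} φ(z - w̄) dλ(w). -/
noncomputable def Sphi (φ : ℂ → ℂ) (f : ℂ → ℂ) (z : ℂ) : ℂ :=
  gaussInt (fun w => f w * Complex.exp (z * starRingEnd ℂ w) * φ (z - starRingEnd ℂ w))

/-- S^α_φ = U_{-α} S_φ U_α: for every z, S^α_φ f(z) = S_φ(U_α f)(e^{iα}z), where
U_α f(z) = f(e^{-iα}z). Hence S^α_φ and S_φ are unitarily equivalent. -/
theorem sphi_alpha_unitary_equiv (α : ℝ) (φ : ℂ → ℂ) (hφ : Differentiable ℂ φ)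
    (hφ2 : Integrable (fun z : ℂ => ‖φ z‖^2 * Real.exp (-‖z‖^2)))
    (p : Polynomial ℂ) (f : ℂ → ℂ) (hf : ∀ z, f z = p.eval z) (z : ℂ) :
    gaussInt (fun w => f w * Complex.exp (z * starRingEnd ℂ w) *
        φ (Complex.exp (Complex.I * α) * z - Complex.exp (-(Complex.I * α)) * starRingEnd ℂ w)) =
      Sphi φ (fun w => f (Complex.exp (-(Complex.I * α)) * w)) (Complex.exp (Complex.I * α) * z) := by
  have h1 : Complex.exp (-(Complex.I * α)) * Complex.exp (Complex.I * α) = 1 := by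
    rw [← Complex.exp_add]; simp
  have hc : starRingEnd ℂ (Complex.exp (Complex.I * α)) = Complex.exp (-(Complex.I * α)) := by
    rw [← Complex.exp_conj]; simp
  have hn : ‖Complex.exp (Complex.I * α)‖ = 1 := by
    rw [mul_comm]; exact Complex.norm_exp_ofReal_mul_I α
  let c : Circle := Circle.exp α
  have hcc : (c : ℂ) = Complex.exp (Complex.I * α) := by
    simp [c, Circle.coe_exp, mul_comm]
  unfold Sphi gaussInt
  congr 1
  have key := (rotation c).measurePreserving.integral_comp
    (rotation c).toHomeomorph.measurableEmbedding
    (fun w : ℂ => f (Complex.exp (-(Complex.I * α)) * w) *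
      Complex.exp (Complex.exp (Complex.I * α) * z * starRingEnd ℂ w) *
      φ (Complex.exp (Complex.I * α) * z - starRingEnd ℂ w) * Complex.exp (-(‖w‖ : ℂ)^2))
  rw [← key]
  congr 1
  funext w
  have e1 : Complex.exp (-(Complex.I * α)) * (Complex.exp (Complex.I * α) * w) = w := by
    rw [← mul_assoc, h1, one_mul]
  have e2 : Complex.exp (Complex.I * α) * z * (Complex.exp (-(Complex.I * α)) * starRingEnd ℂ w)
      = z * starRingEnd ℂ w := by
    linear_combination (z * starRingEnd ℂ w) * h1
  simp only [rotation_apply, hcc, map_mul, hc, norm_mul, hn, one_mul, e1, e2]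
end

section
/- Let s ∈ ℝ with s ≠ 0 and n ≥ 0 an integer, and define φ_n(z) = √(|s|/π) ∫_ℝ tⁿ e^{-((s²+2)/2) t² - t s z} dt. Then there exist complex numbers a_0, a_1, …, a_n with a_n = √(2|s|/(s²+2)) · (-1)ⁿ sⁿ / (s²+2)ⁿ (in particular a_n ≠ 0) such that for all z ∈ ℂ, φ_n(z) = (a_n zⁿ + ⋯ + a_1 z + a_0) e^{s² z²/(2(s²+2))}. -/
open MeasureTheory Complex

lemma aux_int (b w : ℂ) (hb : 0 < b.re) (n : ℕ) :
    Integrable (fun t : ℝ => (t:ℂ)^n * cexp (-b * (t:ℂ)^2 + w * t + 0)) := by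
  have h1 := (integrable_cexp_quadratic hb (w+1) 0).norm
  have h2 := (integrable_cexp_quadratic hb (w-1) 0).norm
  refine ((h1.add h2).const_mul (n.factorial : ℝ)).mono' (by fun_prop) ?_
  refine Filter.Eventually.of_forall fun t => ?_
  have e1 : cexp (-b * (t:ℂ)^2 + (w+1) * t + 0) = cexp (-b * (t:ℂ)^2 + w * t + 0) * cexp (t:ℂ) := by
    rw [← Complex.exp_add]; ring_nf
  have e2 : cexp (-b * (t:ℂ)^2 + (w-1) * t + 0)
      = cexp (-b * (t:ℂ)^2 + w * t + 0) * cexp ((-t : ℝ):ℂ) := by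
    rw [← Complex.exp_add]; push_cast; ring_nf
  have key : |t|^n ≤ n.factorial * (Real.exp t + Real.exp (-t)) := by
    have h := Real.pow_div_factorial_le_exp |t| (abs_nonneg t) n
    rw [div_le_iff₀ (by positivity)] at h
    have h3 : Real.exp |t| ≤ Real.exp t + Real.exp (-t) := by
      rcases abs_cases t with ⟨h, _⟩ | ⟨h, _⟩ <;> rw [h] <;>
        linarith [Real.exp_pos t, Real.exp_pos (-t)]
    have : (0:ℝ) < n.factorial := by positivity
    nlinarith
  simp only [Pi.add_apply]
  rw [e1, e2, norm_mul, norm_mul, norm_mul, norm_pow, ← Complex.ofReal_exp, ← Complex.ofReal_exp,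
    Complex.norm_real, Complex.norm_real, Complex.norm_real, Real.norm_eq_abs,
    Real.norm_of_nonneg (Real.exp_pos _).le, Real.norm_of_nonneg (Real.exp_pos _).le]
  calc _ ≤ (n.factorial * (Real.exp t + Real.exp (-t))) * ‖cexp (-b * (t:ℂ)^2 + w * t + 0)‖ := by
        gcongr
    _ = _ := by ring

lemma aux_rec (b w : ℂ) (hb : 0 < b.re) (n : ℕ) :
    2 * b * (∫ t : ℝ, (t:ℂ)^(n+1) * cexp (-b * (t:ℂ)^2 + w * t + 0)) =
      w * (∫ t : ℝ, (t:ℂ)^n * cexp (-b * (t:ℂ)^2 + w * t + 0)) +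
      n * (∫ t : ℝ, (t:ℂ)^(n-1) * cexp (-b * (t:ℂ)^2 + w * t + 0)) := by
  have hd : ∀ t : ℝ, HasDerivAt (fun t : ℝ => (t:ℂ)^n * cexp (-b * (t:ℂ)^2 + w * t + 0))
      (n * ((t:ℂ)^(n-1) * cexp (-b * (t:ℂ)^2 + w * t + 0))
        + w * ((t:ℂ)^n * cexp (-b * (t:ℂ)^2 + w * t + 0))
        - 2 * b * ((t:ℂ)^(n+1) * cexp (-b * (t:ℂ)^2 + w * t + 0))) t := by
    intro t
    have hi : HasDerivAt (fun x : ℂ => x) 1 (t:ℂ) := hasDerivAt_id _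
    have h1 := (hi.pow n).mul
      (((((hi.pow 2).const_mul (-b)).add (hi.const_mul w)).add_const 0).cexp)
    have h2 := h1.comp_ofReal
    convert! h2 using 1
    simp only [Pi.pow_apply, Pi.add_apply]
    push_cast
    ring
  have i0 := (aux_int b w hb n)
  have i1 := (aux_int b w hb (n+1)).const_mul (2*b)
  have i2 := (aux_int b w hb (n-1)).const_mul (n:ℂ)
  have i3 := (aux_int b w hb n).const_mul w
  have h := integral_eq_zero_of_hasDerivAt_of_integrable hd ((i2.add i3).sub i1) i0
  replace h := (integral_sub (i2.add i3) i1).symm.trans h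
  rw [integral_add' i2 i3, integral_const_mul, integral_const_mul,
    integral_const_mul] at h
  linear_combination -h

open Polynomial in
lemma aux_poly (s : ℝ) (J : ℕ → ℂ → ℂ) (hJ : ∀ n z, ((s:ℂ)^2+2) * J (n+1) z =
      (-(s * z)) * J n z + n * J (n-1) z) (n : ℕ) :
    ∃ P : ℂ[X], P.natDegree ≤ n ∧ P.coeff n = (-s/((s:ℂ)^2+2))^n ∧
      ∀ z, J n z = P.eval z * J 0 z := by
  have hc : ((s:ℂ)^2+2) ≠ 0 := by
    have : (s^2+2:ℝ) ≠ 0 := by positivity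
    exact_mod_cast this
  induction n using Nat.strong_induction_on with
  | _ n ih =>
  rcases n with _ | n
  · exact ⟨1, by simp, by simp, by simp⟩
  obtain ⟨P, hP, hPc, hPe⟩ := ih n (by omega)
  obtain ⟨Q, hQ, hQc, hQe⟩ := ih (n-1) (by omega)
  refine ⟨C (-s/((s:ℂ)^2+2)) * (P * X) + C (n/((s:ℂ)^2+2)) * Q, ?_, ?_, ?_⟩
  · refine natDegree_add_le_of_degree_le ?_ ?_
    · refine (natDegree_C_mul_le _ _).trans (natDegree_mul_le.trans ?_)
      rw [natDegree_X]; omega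
    · exact (natDegree_C_mul_le _ _).trans (by omega)
  · rw [coeff_add, coeff_C_mul, coeff_C_mul, coeff_mul_X, hPc,
      coeff_eq_zero_of_natDegree_lt (by omega : Q.natDegree < n+1)]
    ring
  · intro z
    apply mul_left_cancel₀ hc
    rw [hJ, hPe, hQe]
    simp
    field_simp

/-- φ_n(z) = (a_n zⁿ + ⋯ + a₁z + a₀) e^{s²z²/(2(s²+2))} with leading coefficient
a_n = √(2|s|/(s²+2)) (-1)ⁿ sⁿ/(s²+2)ⁿ ≠ 0. -/
theorem phi_n_form (s : ℝ) (hs : s ≠ 0) (n : ℕ) (φn : ℂ → ℂ)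
    (hφ : ∀ z : ℂ, φn z = ((Real.sqrt (|s| / Real.pi) : ℝ) : ℂ) *
      ∫ t : ℝ, (t:ℂ)^n * Complex.exp (-(((s:ℂ)^2 + 2)/2) * (t:ℂ)^2 - (t:ℂ) * (s:ℂ) * z)) :
    ∃ a : ℕ → ℂ,
      a n = ((Real.sqrt (2*|s|/(s^2+2)) : ℝ) : ℂ) * (-1)^n * (s:ℂ)^n / ((s:ℂ)^2+2)^n ∧
      a n ≠ 0 ∧
      ∀ z : ℂ, φn z = (∑ k ∈ Finset.range (n+1), a k * z^k) *
        Complex.exp ((s:ℂ)^2 * z^2 / (2*((s:ℂ)^2+2))) := by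
  have hc : ((s:ℂ)^2+2) ≠ 0 := by
    have : (s^2+2:ℝ) ≠ 0 := by positivity
    exact_mod_cast this
  have hbe : ((s:ℂ)^2+2)/2 = (((s^2+2)/2 : ℝ) : ℂ) := by push_cast; ring
  have hb : 0 < (((s:ℂ)^2+2)/2).re := by
    rw [hbe, Complex.ofReal_re]; positivity
  obtain ⟨P, hP, hPc, hPe⟩ := aux_poly s (fun n z => ∫ t : ℝ, (t:ℂ)^n *
      cexp (-(((s:ℂ)^2 + 2)/2) * (t:ℂ)^2 + (-(s*z)) * t + 0)) (by
    intro n z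
    have := aux_rec (((s:ℂ)^2 + 2)/2) (-(s*z)) hb n
    rw [← this]; ring) n
  have hlead : ((Real.sqrt (2*|s|/(s^2+2)) : ℝ) : ℂ) * P.coeff n =
      ((Real.sqrt (2*|s|/(s^2+2)) : ℝ) : ℂ) * (-1)^n * (s:ℂ)^n / ((s:ℂ)^2+2)^n := by
    rw [hPc, div_pow, neg_pow]; ring
  refine ⟨fun k => ((Real.sqrt (2*|s|/(s^2+2)) : ℝ) : ℂ) * P.coeff k, hlead, ?_, ?_⟩
  · have h1 : Real.sqrt (2*|s|/(s^2+2)) ≠ 0 := by positivity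
    have h2 : (s:ℂ) ≠ 0 := by exact_mod_cast hs
    simp only [hPc]
    refine mul_ne_zero (by exact_mod_cast h1) (pow_ne_zero _ (div_ne_zero (neg_ne_zero.2 h2) hc))
  · intro z
    have h0 : (∫ t : ℝ, (t:ℂ)^0 * cexp (-(((s:ℂ)^2 + 2)/2) * (t:ℂ)^2 + (-(s*z)) * t + 0)) =
        ((Real.sqrt (2 * Real.pi / (s^2+2)) : ℝ) : ℂ) *
          Complex.exp ((s:ℂ)^2 * z^2 / (2*((s:ℂ)^2+2))) := by
      simp only [pow_zero, one_mul]
      rw [integral_cexp_quadratic (by simpa using hb)]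
      congr 1
      · rw [neg_neg, hbe, Real.sqrt_eq_rpow, Complex.ofReal_cpow (by positivity)]
        congr 1
        · push_cast; field_simp
        · push_cast; rfl
      · congr 1
        field_simp
        ring
    have hI : (∫ t : ℝ, (t:ℂ)^n * Complex.exp (-(((s:ℂ)^2 + 2)/2) * (t:ℂ)^2 - (t:ℂ) * (s:ℂ) * z))
        = ∫ t : ℝ, (t:ℂ)^n * cexp (-(((s:ℂ)^2 + 2)/2) * (t:ℂ)^2 + (-(s*z)) * t + 0) := by
      congr 1; ext t; congr 2; ring
    have hq : Real.sqrt (2*|s|/(s^2+2)) =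
        Real.sqrt (|s| / Real.pi) * Real.sqrt (2 * Real.pi / (s^2+2)) := by
      rw [← Real.sqrt_mul (by positivity)]
      congr 1
      have := Real.pi_pos
      field_simp
    have hPe' := hPe z
    beta_reduce at hPe'
    rw [hφ, hI, hPe', h0, Polynomial.eval_eq_sum_range' (Nat.lt_succ_of_le hP), hq]
    simp only [mul_assoc, ← Finset.mul_sum]
    push_cast
    ring
end

section
/- Let 0 < a < 1/2 and b ∈ ℝ, and let φ(z) = e^{a(z-b)²}. Then φ belongs to the Fock space (i.e., φ is entire and ∫_ℂ |φ(z)|² dλ(z) < ∞) and the integral operator S_φ is bounded on the Fock space: there exists a constant C ≥ 0 such that for every polynomial function f : ℂ → ℂ, ∫_ℂ |S_φ f(z)|² dλ(z) ≤ C ∫_ℂ |f(z)|² dλ(z). -/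
open MeasureTheory Complex

lemma gsb_int (c : ℝ) (hc : 0 < c) : Integrable (fun w : ℂ => Real.exp (-c * ‖w‖^2)) := by
  have h := GaussianFourier.integrable_cexp_neg_mul_sq_norm_add (V := ℂ) (b := (c : ℂ))
    (by simpa using hc) 0 0
  have h2 := h.norm
  refine h2.congr (Filter.Eventually.of_forall fun w => ?_)
  simp only [Complex.norm_exp]
  congr 1
  simp [← Complex.ofReal_pow]

lemma gsb_poly (p : Polynomial ℂ) :
    ∃ C : ℝ, 0 ≤ C ∧ ∀ w : ℂ, ‖p.eval w‖ ≤ C * Real.exp (‖w‖^2 / 4) := by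
  induction p using Polynomial.induction_on' with
  | add p q hp hq =>
    obtain ⟨C, hC, h1⟩ := hp
    obtain ⟨D, hD, h2⟩ := hq
    refine ⟨C + D, by positivity, fun w => ?_⟩
    rw [Polynomial.eval_add, add_mul]
    exact (norm_add_le _ _).trans (add_le_add (h1 w) (h2 w))
  | monomial n c =>
    refine ⟨‖c‖ * (n.factorial * Real.exp 1), by positivity, fun w => ?_⟩
    rw [Polynomial.eval_monomial, norm_mul, norm_pow]
    have h1 := Real.pow_div_factorial_le_exp ‖w‖ (norm_nonneg w) n
    have h2 : Real.exp ‖w‖ ≤ Real.exp 1 * Real.exp (‖w‖^2/4) := by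
      rw [← Real.exp_add]
      apply Real.exp_le_exp.mpr
      nlinarith [sq_nonneg (‖w‖ - 2)]
    rw [div_le_iff₀ (by positivity)] at h1
    have h3 : ‖w‖^n ≤ n.factorial * Real.exp 1 * Real.exp (‖w‖^2/4) := by
      have : (0:ℝ) ≤ n.factorial := by positivity
      nlinarith
    calc ‖c‖ * ‖w‖^n ≤ ‖c‖ * (n.factorial * Real.exp 1 * Real.exp (‖w‖^2/4)) := by gcongr
      _ = _ := by ring

lemma gsb_real (a b s t : ℝ) (ha2 : a < 1/2) :
    -(1/2) * (s^2+t^2) + a*(s-b)^2 ≤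
      (2*(a*b)^2/(1/2-a) + a*b^2) + -((1/2-a)/2) * (s^2+t^2) - (1/2 - (1/2-a)/2) * t^2 := by
  have hd : 0 < 1/2 - a := by linarith
  have key : 0 ≤ ((1/2-a)/2) * (s + 2*(a*b)/(1/2-a))^2 := by positivity
  have e : ((1/2-a)/2) * (s + 2*(a*b)/(1/2-a))^2
      = ((1/2-a)/2)*s^2 + 2*a*b*s + 2*(a*b)^2/(1/2-a) := by
    have e' : ∀ d : ℝ, 0 < d → (d/2) * (s + 2*(a*b)/d)^2
        = (d/2)*s^2 + 2*a*b*s + 2*(a*b)^2/d := by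
      intro d hd
      field_simp
      ring
    exact e' _ hd
  rw [e] at key
  nlinarith

lemma gsb_nsq (z : ℂ) : ‖z‖^2 = z.re^2 + z.im^2 := by
  rw [Complex.sq_norm, Complex.normSq_apply]; ring

/-- For 0 < a < 1/2 and b ∈ ℝ, the function φ(z) = e^{a(z-b)²} belongs to the Fock space and
the operator S_φ is bounded on the Fock space. -/
theorem gaussian_symbol_bounded (a b : ℝ) (ha : 0 < a) (ha2 : a < 1/2) (φ : ℂ → ℂ)
    (hφ : ∀ z : ℂ, φ z = Complex.exp ((a : ℂ) * (z - (b : ℂ))^2)) :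
    (Differentiable ℂ φ ∧ Integrable (fun z : ℂ => ‖φ z‖^2 * Real.exp (-‖z‖^2))) ∧
    ∃ C : ℝ, 0 ≤ C ∧ ∀ p : Polynomial ℂ,
      (∫ z : ℂ, ‖Sphi φ (fun w => p.eval w) z‖^2 * Real.exp (-‖z‖^2) / Real.pi) ≤
        C * ∫ z : ℂ, ‖p.eval z‖^2 * Real.exp (-‖z‖^2) / Real.pi := by
  obtain rfl : φ = fun z => Complex.exp ((a : ℂ) * (z - (b : ℂ))^2) := funext hφ
  have hdiff : Differentiable ℂ (fun z : ℂ => Complex.exp ((a : ℂ) * (z - (b : ℂ))^2)) := by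
    fun_prop
  set E : ℝ := 2*(a*b)^2/(1/2-a) + a*b^2 with hE
  set c : ℝ := (1/2-a)/2 with hc
  have hcpos : 0 < c := by rw [hc]; linarith
  have hc4 : c < 1/2 := by rw [hc]; linarith
  refine ⟨⟨hdiff, ?_⟩, ?_⟩
  · refine ((gsb_int (2*c) (by positivity)).const_mul (Real.exp (2*E))).mono' ?_ ?_
    · have := hdiff.continuous
      exact Continuous.aestronglyMeasurable (by fun_prop)
    · refine Filter.Eventually.of_forall fun z => ?_
      rw [Real.norm_of_nonneg (by positivity), Complex.norm_exp, ← Real.exp_nat_mul,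
        ← Real.exp_add, ← Real.exp_add]
      apply Real.exp_le_exp.mpr
      have h := gsb_real a b z.re z.im ha2
      rw [← hE, ← hc] at h
      rw [gsb_nsq]
      have : ((a : ℂ) * (z - (b : ℂ))^2).re = a * ((z.re - b)^2 - z.im^2) := by
        simp [pow_two]
      rw [this]
      push_cast
      nlinarith [mul_nonneg ha.le (sq_nonneg z.im), mul_nonneg (sub_nonneg.mpr hc4.le) (sq_nonneg z.im)]
  · set k : ℂ → ℝ := fun w => Real.exp E * Real.exp (-c * ‖w‖^2) with hk
    have kint : Integrable k := (gsb_int c hcpos).const_mul _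
    have kcont : Continuous k := by rw [hk]; fun_prop
    have kpos : ∀ w, 0 < k w := fun w => by positivity
    have kbd : ∀ w, k w ≤ Real.exp E := fun w => by
      have : Real.exp (-c * ‖w‖^2) ≤ 1 := Real.exp_le_one_iff.mpr (by nlinarith [sq_nonneg ‖w‖])
      have h := Real.exp_pos E
      simp only [hk]; nlinarith
    set K : ℝ := ∫ w, k w with hK
    have Kpos : 0 < K := by
      rw [hK, integral_pos_iff_support_of_nonneg (fun w => (kpos w).le) kint]
      have : Function.support k = Set.univ := by
        ext w; simp [(kpos w).ne']
      rw [this]; simp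
    refine ⟨Real.pi⁻¹^2 * K^2, by positivity, fun p => ?_⟩
    obtain ⟨D, hD, hp⟩ := gsb_poly p
    set u : ℂ → ℝ := fun w => ‖p.eval w‖ * Real.exp (-‖w‖^2/2) with hu
    have ucont : Continuous u := by
      have := p.continuous
      rw [hu]; fun_prop
    have unn : ∀ w, 0 ≤ u w := fun w => by positivity
    have usq : ∀ w, u w^2 = ‖p.eval w‖^2 * Real.exp (-‖w‖^2) := fun w => by
      simp only [hu]; rw [mul_pow, ← Real.exp_nat_mul]; congr 2; push_cast; ring
    have ubd : ∀ w, u w ≤ D * Real.exp (-(1/4) * ‖w‖^2) := fun w => by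
      have : Real.exp (-(1/4) * ‖w‖^2) = Real.exp (‖w‖^2/4) * Real.exp (-‖w‖^2/2) := by
        rw [← Real.exp_add]; congr 1; ring
      rw [this, ← mul_assoc]
      exact mul_le_mul_of_nonneg_right (hp w) (Real.exp_pos _).le
    have uint : Integrable u := by
      refine ((gsb_int (1/4) (by norm_num)).const_mul D).mono' ucont.aestronglyMeasurable ?_
      exact Filter.Eventually.of_forall fun w => by
        rw [Real.norm_of_nonneg (unn w)]; exact ubd w
    have ubd' : ∀ w, u w ≤ D := fun w => (ubd w).trans (by
      have : Real.exp (-(1/4) * ‖w‖^2) ≤ 1 :=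
        Real.exp_le_one_iff.mpr (by nlinarith [sq_nonneg ‖w‖])
      nlinarith)
    have u2int : Integrable (fun w => u w^2) := by
      refine (uint.const_mul D).mono' (by fun_prop) ?_
      exact Filter.Eventually.of_forall fun w => by
        rw [Real.norm_of_nonneg (sq_nonneg _), pow_two]
        exact mul_le_mul_of_nonneg_right (ubd' w) (unn w)
    have mulint : ∀ g : ℂ → ℝ, Integrable g → ∀ z, Integrable (fun w => g w * k (z - w)) := by
      intro g hg z
      refine hg.mul_bdd (c := Real.exp E) (by fun_prop) ?_
      exact Filter.Eventually.of_forall fun w => by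
        rw [Real.norm_of_nonneg (kpos _).le]; exact kbd _
    have kz : ∀ z : ℂ, Integrable (fun w => k (z - w)) := fun z => kint.comp_sub_left z
    have kzK : ∀ z : ℂ, ∫ w, k (z - w) = K := fun z => integral_sub_left_eq_self k volume z
    -- Cauchy-Schwarz
    have CS : ∀ z : ℂ, (∫ w, u w * k (z - w))^2 ≤ K * ∫ w, u w^2 * k (z - w) := by
      intro z
      set I := ∫ w, u w * k (z - w) with hI
      have h0 : 0 ≤ ∫ w, (u w - I/K)^2 * k (z - w) :=
        integral_nonneg fun w => mul_nonneg (sq_nonneg _) (kpos _).le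
      have h1 : ∫ w, (u w - I/K)^2 * k (z - w)
          = (∫ w, u w^2 * k (z - w)) - 2*(I/K)*I + (I/K)^2*K := by
        have : (fun w => (u w - I/K)^2 * k (z - w)) = fun w =>
            (u w^2 * k (z - w) - 2*(I/K)*(u w * k (z - w))) + (I/K)^2 * k (z - w) := by
          funext w; ring
        rw [this, integral_add, integral_sub, integral_const_mul, integral_const_mul, kzK]
        · exact mulint _ u2int z
        · exact (mulint _ uint z).const_mul _
        · exact (mulint _ u2int z).sub ((mulint _ uint z).const_mul _)
        · exact (kz z).const_mul _
      rw [h1] at h0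
      have h2 : K * ((∫ w, u w^2 * k (z - w)) - 2*(I/K)*I + (I/K)^2*K)
          = K * (∫ w, u w^2 * k (z - w)) - I^2 := by
        field_simp; ring
      nlinarith [mul_nonneg Kpos.le h0]
    -- pointwise bound
    have PW : ∀ z : ℂ, ‖Sphi (fun z => Complex.exp ((a : ℂ) * (z - (b : ℂ))^2))
        (fun w => p.eval w) z‖ ≤
        Real.pi⁻¹ * (Real.exp (‖z‖^2/2) * ∫ w, u w * k (z - w)) := by
      intro z
      unfold Sphi gaussInt
      rw [norm_mul, norm_inv, Complex.norm_real, Real.norm_of_nonneg Real.pi_pos.le]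
      refine mul_le_mul_of_nonneg_left ?_ (by positivity)
      refine (norm_integral_le_integral_norm _).trans ?_
      rw [← integral_const_mul]
      refine integral_mono_of_nonneg (Filter.Eventually.of_forall fun w => norm_nonneg _)
        ((mulint _ uint z).const_mul _) (Filter.Eventually.of_forall fun w => ?_)
      simp only [norm_mul, Complex.norm_exp, hu, hk]
      have e1 : Real.exp (‖z‖^2/2) * (‖p.eval w‖ * Real.exp (-‖w‖^2/2) *
          (Real.exp E * Real.exp (-c * ‖z - w‖^2))) =
          ‖p.eval w‖ * Real.exp (‖z‖^2/2 + -‖w‖^2/2 + E + -c * ‖z - w‖^2) := by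
        simp only [Real.exp_add]; ring
      rw [e1, mul_assoc, mul_assoc, ← Real.exp_add, ← Real.exp_add]
      refine mul_le_mul_of_nonneg_left (Real.exp_le_exp.mpr ?_) (norm_nonneg _)
      have r1 : (z * starRingEnd ℂ w).re = z.re * w.re + z.im * w.im := by simp
      have r2 : ((a : ℂ) * (z - starRingEnd ℂ w - (b : ℂ))^2).re
          = a * ((z.re - w.re - b)^2 - (z.im + w.im)^2) := by
        simp [pow_two]
      have r3 : (-(‖w‖ : ℂ)^2).re = -‖w‖^2 := by
        rw [← Complex.ofReal_pow, ← Complex.ofReal_neg, Complex.ofReal_re]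
      rw [r1, r2, r3, gsb_nsq, gsb_nsq, gsb_nsq]
      have h := gsb_real a b (z.re - w.re) (z.im - w.im) ha2
      rw [← hE, ← hc] at h
      simp only [Complex.sub_re, Complex.sub_im]
      have q1 := mul_nonneg ha.le (sq_nonneg (z.im + w.im))
      have q2 := mul_nonneg (sub_nonneg.mpr hc4.le) (sq_nonneg (z.im - w.im))
      linarith
    -- Young
    have cint : Integrable (fun z => ∫ w, u w^2 * k (z - w)) := by
      have := MeasureTheory.Integrable.integrable_convolution (ContinuousLinearMap.mul ℝ ℝ)
        u2int kint
      exact this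
    have cval : ∫ z, ∫ w, u w^2 * k (z - w) = (∫ w, u w^2) * K := by
      have := MeasureTheory.integral_convolution (ContinuousLinearMap.mul ℝ ℝ)
        (μ := (volume : Measure ℂ)) (ν := (volume : Measure ℂ)) u2int kint
      exact this
    calc _ ≤ ∫ z, (Real.pi⁻¹^2 * K / Real.pi) * ∫ w, u w^2 * k (z - w) := by
          refine integral_mono_of_nonneg (Filter.Eventually.of_forall fun z => ?_)
            (cint.const_mul _) (Filter.Eventually.of_forall fun z => ?_)
          · simp only [Pi.zero_apply]; positivity
          · have h1 := pow_le_pow_left₀ (norm_nonneg _) (PW z) 2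
            have h2 := CS z
            have e : Real.exp (‖z‖^2/2)^2 * Real.exp (-‖z‖^2) = 1 := by
              rw [← Real.exp_nat_mul, ← Real.exp_add]
              rw [Real.exp_eq_one_iff]; push_cast; ring
            have h3 := mul_le_mul_of_nonneg_right h1 (Real.exp_pos (-‖z‖^2)).le
            have h4 : (Real.pi⁻¹ * (Real.exp (‖z‖^2/2) * ∫ w, u w * k (z - w)))^2
                * Real.exp (-‖z‖^2) = Real.pi⁻¹^2 * (∫ w, u w * k (z - w))^2 := by
              rw [mul_pow, mul_pow]
              linear_combination (Real.pi⁻¹^2 * (∫ w, u w * k (z - w))^2) * e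
            rw [h4] at h3
            have h5 := h3.trans (mul_le_mul_of_nonneg_left h2 (sq_nonneg Real.pi⁻¹))
            have h6 := div_le_div_of_nonneg_right h5 Real.pi_pos.le
            refine h6.trans (le_of_eq ?_)
            ring
      _ = _ := by
          rw [integral_const_mul, cval, integral_div]
          simp only [usq]
          ring
end

section
/- For every z ∈ ℂ, (1/π) ∫_ℝ e^{-t²}(e^{√2 t z} - 1)/t dt = (2/√π) A(z/√2), where the integrand is absolutely integrable (it extends continuously by the value √2 z at t = 0 and has Gaussian decay at infinity). In particular, the principal-value integral φ(z) = (1/π) p.v.∫_ℝ e^{-t² + √2 t z}/t dt defines the entire function (2/√π) A(z/√2), which satisfies φ'(z) = √(2/π) e^{z²/2} and φ(0) = 0. -/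
open MeasureTheory Complex

/-- A(z) = ∫₀^z e^{u²} du, the antiderivative of e^{z²} vanishing at 0, the integral being
taken along the segment from 0 to z (equivalently, any path from 0 to z). -/
noncomputable def Afun (z : ℂ) : ℂ :=
  ∫ t in (0:ℝ)..1, z * Complex.exp (((t:ℂ) * z)^2)

theorem Afun_hasDerivAt (z : ℂ) : HasDerivAt Afun (Complex.exp (z ^ 2)) z := by
  have hd : Differentiable ℂ (fun w : ℂ => Complex.exp (w ^ 2)) := by fun_prop
  obtain ⟨g, hg⟩ := hd.isExactOn_univ
  have hA : Afun = fun w => g w - g 0 := by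
    funext w
    have h1 : ∀ t ∈ Set.uIcc (0:ℝ) 1, HasDerivAt (fun t : ℝ => g ((t:ℂ) * w))
        (w * Complex.exp (((t:ℂ) * w) ^ 2)) t := by
      intro t _
      have h2 : HasDerivAt (fun s : ℂ => s * w) w (t:ℂ) := by
        simpa using (hasDerivAt_id (t:ℂ)).mul_const w
      have h3 := ((hg ((t:ℂ) * w) (Set.mem_univ _)).comp (t:ℂ) h2).comp_ofReal
      rw [mul_comm w]
      exact h3
    have h4 := intervalIntegral.integral_eq_sub_of_hasDerivAt h1
      (Continuous.intervalIntegrable (by fun_prop) _ _)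
    simpa [Afun] using h4
  rw [hA]
  exact (hg z (Set.mem_univ _)).sub_const _

theorem gauss_aux (c : ℂ) (s : ℝ) :
    ∫ t : ℝ, c * Complex.exp (-(t:ℂ) ^ 2 + c * s * t)
      = c * ((Real.sqrt Real.pi : ℂ) * Complex.exp ((c * s) ^ 2 / 4)) := by
  rw [integral_const_mul]
  have h := integral_cexp_quadratic (b := -1) (by simp) (c * s) 0
  have h2 : ((Real.pi : ℂ) / - -1) ^ (1 / 2 : ℂ) = (Real.sqrt Real.pi : ℂ) := by
    rw [Real.sqrt_eq_rpow, Complex.ofReal_cpow Real.pi_pos.le]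
    simp
  rw [h2] at h
  have h3 : (0 : ℂ) - (c * s) ^ 2 / (4 * -1) = (c * s) ^ 2 / 4 := by ring
  rw [h3] at h
  rw [← h]
  simp

theorem integrable_aux (c : ℂ) :
    Integrable (Function.uncurry fun (t s : ℝ) => c * Complex.exp (-(t:ℂ) ^ 2 + c * s * t))
      ((volume : Measure ℝ).prod (volume.restrict (Set.Ioc (0:ℝ) 1))) := by
  have h1 : Integrable (fun t : ℝ => ‖c‖ * Real.exp (‖c‖ ^ 2 / 2) * Real.exp (-(1/2) * t ^ 2)) :=
    (integrable_exp_neg_mul_sq (by norm_num)).const_mul _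
  have h2 := h1.comp_fst (volume.restrict (Set.Ioc (0:ℝ) 1))
  refine h2.mono' (Continuous.aestronglyMeasurable (by fun_prop)) ?_
  have h3 : ∀ᵐ p : ℝ × ℝ ∂((volume : Measure ℝ).prod (volume.restrict (Set.Ioc (0:ℝ) 1))),
      p.2 ∈ Set.Ioc (0:ℝ) 1 :=
    Measure.quasiMeasurePreserving_snd.ae (ae_restrict_mem measurableSet_Ioc)
  filter_upwards [h3] with p hp
  obtain ⟨t, s⟩ := p
  simp only [Function.uncurry] at *
  rw [norm_mul, Complex.norm_exp, mul_assoc ‖c‖, ← Real.exp_add]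
  gcongr
  have h4 : (-(t:ℂ) ^ 2 + c * s * t).re = -t ^ 2 + c.re * (s * t) := by
    rw [Complex.add_re, mul_assoc, ← Complex.ofReal_mul, Complex.re_mul_ofReal,
      Complex.neg_re, ← Complex.ofReal_pow, Complex.ofReal_re]
  rw [h4]
  have h5 : c.re * (s * t) ≤ ‖c‖ * |t| := by
    refine (le_abs_self _).trans ?_
    rw [abs_mul, abs_mul, abs_of_pos hp.1]
    have := Complex.abs_re_le_norm c
    have h6 : s * |t| ≤ |t| := by nlinarith [hp.2, abs_nonneg t]
    have := hp.1
    gcongr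
  nlinarith [sq_nonneg (‖c‖ - |t|), sq_abs t]

theorem inner_aux (c : ℂ) (t : ℝ) (ht : t ≠ 0) :
    Complex.exp (-(t:ℂ) ^ 2) * (Complex.exp (c * t) - 1) / (t:ℂ)
      = ∫ s in Set.Ioc (0:ℝ) 1, c * Complex.exp (-(t:ℂ) ^ 2 + c * s * t) := by
  rw [← intervalIntegral.integral_of_le zero_le_one]
  have ht' : (t:ℂ) ≠ 0 := by exact_mod_cast ht
  have h1 : ∀ s ∈ Set.uIcc (0:ℝ) 1,
      HasDerivAt (fun s : ℝ => Complex.exp (-(t:ℂ) ^ 2 + c * s * t) / (t:ℂ))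
        (c * Complex.exp (-(t:ℂ) ^ 2 + c * s * t)) s := by
    intro s _
    have h2 : HasDerivAt (fun s : ℂ => -(t:ℂ) ^ 2 + c * s * t) (c * t) (s:ℂ) := by
      simpa using (((hasDerivAt_id (s:ℂ)).const_mul c).mul_const (t:ℂ)).const_add (-(t:ℂ) ^ 2)
    have h3 := (h2.cexp.div_const (t:ℂ)).comp_ofReal
    convert h3 using 1
    field_simp
  rw [intervalIntegral.integral_eq_sub_of_hasDerivAt h1
    (Continuous.intervalIntegrable (by fun_prop) _ _)]
  simp only [Complex.ofReal_one, Complex.ofReal_zero, mul_one, mul_zero, zero_mul, add_zero,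
    Complex.exp_add]
  ring

theorem main_aux (c : ℂ) :
    ∫ t : ℝ, Complex.exp (-(t:ℂ) ^ 2) * (Complex.exp (c * t) - 1) / (t:ℂ)
      = 2 * (Real.sqrt Real.pi : ℂ) * Afun (c / 2) := by
  have h0 : ∀ᵐ t : ℝ, t ≠ 0 := by simp [ae_iff]
  rw [integral_congr_ae (h0.mono fun t ht => inner_aux c t ht),
    integral_integral_swap (integrable_aux c)]
  simp_rw [gauss_aux]
  rw [Afun, intervalIntegral.integral_of_le zero_le_one, ← integral_const_mul]
  congr 1
  funext s
  have : ((s:ℂ) * (c / 2)) ^ 2 = (c * s) ^ 2 / 4 := by ring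
  rw [this]
  ring

/-- (1/π) ∫ e^{-t²}(e^{√2 tz} - 1)/t dt = (2/√π) A(z/√2); this is the principal-value integral
φ(z) = (1/π) p.v.∫ e^{-t² + √2 tz}/t dt, which defines an entire function satisfying
φ'(z) = √(2/π) e^{z²/2} and φ(0) = 0. -/
theorem pv_integral_eq_A (z : ℂ) :
    ((Real.pi : ℂ))⁻¹ *
        (∫ t : ℝ, Complex.exp (-(t:ℂ)^2) * (Complex.exp ((Real.sqrt 2 : ℂ) * (t:ℂ) * z) - 1) / (t:ℂ))
      = 2 / (Real.sqrt Real.pi : ℂ) * Afun (z / (Real.sqrt 2 : ℂ)) ∧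
    HasDerivAt (fun w : ℂ => 2 / (Real.sqrt Real.pi : ℂ) * Afun (w / (Real.sqrt 2 : ℂ)))
      (((Real.sqrt (2 / Real.pi) : ℝ) : ℂ) * Complex.exp (z^2 / 2)) z ∧
    Afun 0 = 0 := by
  have h2 : (Real.sqrt 2 : ℂ) ^ 2 = 2 := by
    rw [← Complex.ofReal_pow, Real.sq_sqrt (by norm_num)]; simp
  have hp : (Real.sqrt Real.pi : ℂ) ^ 2 = (Real.pi : ℂ) := by
    rw [← Complex.ofReal_pow, Real.sq_sqrt Real.pi_pos.le]
  have h2' : (Real.sqrt 2 : ℂ) ≠ 0 := by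
    intro h; rw [h] at h2; norm_num at h2
  have hp' : (Real.sqrt Real.pi : ℂ) ≠ 0 := by
    have := (Real.sqrt_pos.2 Real.pi_pos).ne'
    exact_mod_cast this
  refine ⟨?_, ?_, by simp [Afun]⟩
  · have h := main_aux ((Real.sqrt 2 : ℂ) * z)
    have e : ∀ t : ℝ, (Real.sqrt 2 : ℂ) * (t:ℂ) * z = (Real.sqrt 2 : ℂ) * z * t := fun t => by ring
    simp_rw [e]
    rw [h]
    have e2 : (Real.sqrt 2 : ℂ) * z / 2 = z / (Real.sqrt 2 : ℂ) := by
      rw [div_eq_div_iff two_ne_zero h2', ← h2]; ring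
    rw [e2, ← hp]
    field_simp
  · have h1 : HasDerivAt (fun w : ℂ => w / (Real.sqrt 2 : ℂ)) (1 / (Real.sqrt 2 : ℂ)) z :=
      (hasDerivAt_id z).div_const _
    have h3 := ((Afun_hasDerivAt (z / (Real.sqrt 2 : ℂ))).comp z h1).const_mul
      (2 / (Real.sqrt Real.pi : ℂ))
    refine HasDerivAt.congr_deriv h3 ?_
    rw [div_pow, h2, Real.sqrt_div (by norm_num), Complex.ofReal_div]
    field_simp
    rw [h2]
end
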